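/- Let γ ∈ ℝ \ {0}. There exist λ > 0, M > 0 and ε₀ > 0 such that for every 0 < ε ≤ ε₀ there exists a real-analytic steady solution Ψ_ε of the Euler equations on the γ-rotating sphere with ‖γY₁⁰ − Ψ_ε‖_{G_λ} ≤ Mε, such that Ψ_ε is non-zonal and non-trivial; in particular ⟨Ψ_ε, Y₄²⟩ ≠ 0, so Ψ_ε is not of the form (zonal function) + (element of span{Y₂^m : |m| ≤ 2}). -/

import Mathlib

open MeasureTheory
open scoped ENNReal

noncomputable section

/-- Functions on the unit sphere, represented in colatitude-longitude coordinates `(θ, φ)`. -/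
abbrev SphereFun : Type := ℝ → ℝ → ℝ

/-- The `L²` inner product on the sphere:
`⟨u,v⟩ = ∫₀^{2π} ∫₀^π u v sin θ dθ dφ`. -/
def sInner (u v : SphereFun) : ℝ :=
  ∫ φ in (0:ℝ)..(2*Real.pi), ∫ θ in (0:ℝ)..Real.pi, u θ φ * v θ φ * Real.sin θ

/-- Legendre polynomials via Rodrigues' formula. -/
def legP (n : ℕ) (s : ℝ) : ℝ :=
  (1 / ((2:ℝ)^n * (Nat.factorial n : ℝ))) * iteratedDeriv n (fun x : ℝ => (x^2 - 1)^n) s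

/-- Associated Legendre functions `P_n^m`. -/
def assocLegP (n m : ℕ) (s : ℝ) : ℝ :=
  (-1 : ℝ)^m * (1 - s^2) ^ ((m : ℝ)/2) * iteratedDeriv m (legP n) s

/-- Real spherical harmonics `Y_n^m`. -/
def Ynm (n : ℕ) (m : ℤ) : SphereFun := fun θ φ =>
  if m = 0 then
    Real.sqrt ((2*(n:ℝ)+1)/(4*Real.pi)) * legP n (Real.cos θ)
  else if 0 < m then
    (-1 : ℝ)^(m.natAbs) * Real.sqrt 2 *
      Real.sqrt ((2*(n:ℝ)+1)/(4*Real.pi) *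
        ((Nat.factorial (n - m.natAbs) : ℝ) / (Nat.factorial (n + m.natAbs) : ℝ))) *
      assocLegP n m.natAbs (Real.cos θ) * Real.cos ((m.natAbs : ℝ) * φ)
  else
    (-1 : ℝ)^(m.natAbs) * Real.sqrt 2 *
      Real.sqrt ((2*(n:ℝ)+1)/(4*Real.pi) *
        ((Nat.factorial (n - m.natAbs) : ℝ) / (Nat.factorial (n + m.natAbs) : ℝ))) *
      assocLegP n m.natAbs (Real.cos θ) * Real.sin ((m.natAbs : ℝ) * φ)

/-- The spherical-harmonic coefficient `u_n^m = ⟨u, Y_n^m⟩`. -/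
def coeff (u : SphereFun) (n : ℕ) (m : ℤ) : ℝ := sInner u (Ynm n m)

/-- `μ_n = n(n+1) + 1`. -/
def muSp (n : ℕ) : ℝ := (n:ℝ)*((n:ℝ)+1)+1

/-- Squared (inhomogeneous) Sobolev norm `‖u‖²_{H^k} = Σ μ_n^k |u_n^m|²`. -/
def sobNormSq (k : ℕ) (u : SphereFun) : ℝ≥0∞ :=
  ∑' p : ℕ × ℤ, if |p.2| ≤ (p.1 : ℤ) then
    ENNReal.ofReal ((muSp p.1)^k * (coeff u p.1 p.2)^2) else 0

/-- Squared homogeneous Sobolev norm `‖u‖²_{Ḣ^k} = Σ_{n ≥ 1} λ_n^k |u_n^m|²`. -/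
def dotNormSq (k : ℕ) (u : SphereFun) : ℝ≥0∞ :=
  ∑' p : ℕ × ℤ, if 1 ≤ p.1 ∧ |p.2| ≤ (p.1 : ℤ) then
    ENNReal.ofReal (((p.1:ℝ)*((p.1:ℝ)+1))^k * (coeff u p.1 p.2)^2) else 0

/-- Squared Gevrey norm `‖u‖²_{G_λ} = Σ_{n ≥ 1} μ_n² e^{2λ√μ_n} |u_n^m|²`. -/
def gevNormSq (lam : ℝ) (u : SphereFun) : ℝ≥0∞ :=
  ∑' p : ℕ × ℤ, if 1 ≤ p.1 ∧ |p.2| ≤ (p.1 : ℤ) then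
    ENNReal.ofReal ((muSp p.1)^2 * Real.exp (2*lam*Real.sqrt (muSp p.1)) *
      (coeff u p.1 p.2)^2) else 0

/-- `∂_θ`. -/
def dTheta (u : SphereFun) : SphereFun := fun θ φ => deriv (fun t => u t φ) θ

/-- `∂_φ`. -/
def dPhi (u : SphereFun) : SphereFun := fun θ φ => deriv (fun p => u θ p) φ

/-- The Laplace–Beltrami operator in colatitude-longitude coordinates:
`Δu = (1/sinθ)∂_θ(sinθ ∂_θu) + (1/sin²θ)∂²_φu`. -/
def lapS (u : SphereFun) : SphereFun := fun θ φ =>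
  (1 / Real.sin θ) * deriv (fun t => Real.sin t * dTheta u t φ) θ
  + (1 / (Real.sin θ)^2) * dPhi (dPhi u) θ φ

/-- A zonal function: one depending only on the colatitude `θ`. -/
def Zonal (u : SphereFun) : Prop := ∀ (θ φ₁ φ₂ : ℝ), u θ φ₁ = u θ φ₂

/-- Zonal on the coordinate chart `θ ∈ [0, π]`. -/
def ZonalOn (u : SphereFun) : Prop :=
  ∀ θ ∈ Set.Icc (0:ℝ) Real.pi, ∀ (φ₁ φ₂ : ℝ), u θ φ₁ = u θ φ₂

/-- `2π`-periodicity in the longitude. -/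
def PeriodicPhi (u : SphereFun) : Prop := ∀ θ φ, u θ (φ + 2*Real.pi) = u θ φ

/-- The advection term `U·∇f` for the velocity `U = ∇⊥Ψ`, i.e.
`(1/sinθ)∂_φΨ ∂_θf − ∂_θΨ (1/sinθ)∂_φf`. -/
def advect (Ψ f : SphereFun) : SphereFun := fun θ φ =>
  (1 / Real.sin θ) * dPhi Ψ θ φ * dTheta f θ φ
  - dTheta Ψ θ φ * ((1 / Real.sin θ) * dPhi f θ φ)

/-- Smoothness in the coordinates. -/
def SphSmooth (u : SphereFun) : Prop := ContDiff ℝ (⊤ : ℕ∞) (Function.uncurry u)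

/-- A function is trivial if it is a zonal function plus an element of
`span{Y₂^m : |m| ≤ 2}`; non-triviality is the negation of this. -/
def SphNontrivial (u : SphereFun) : Prop :=
  ¬ ∃ (z : SphereFun) (c : ℤ → ℝ), Zonal z ∧
      ∀ θ ∈ Set.Icc (0:ℝ) Real.pi, ∀ φ : ℝ,
        u θ φ = z θ φ + ∑ m ∈ Finset.Icc (-2 : ℤ) 2, c m * Ynm 2 m θ φ

/-- Real analyticity on the sphere, characterized by membership in a Gevrey class. -/
def RealAnalyticSphere (u : SphereFun) : Prop := ∃ lam > 0, gevNormSq lam u < ⊤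

/-!
If `ΔΨ - 4γY₁⁰` is a function of `Ψ` alone, the steady equation holds because the gradients are
parallel. So it suffices to solve `ΔΨ + 6Ψ - 4γY₁⁰ = αΨ + βΨ³`, with `(α, β)` small, near
`γY₁⁰ + aQ`. Here `Q ∼ sin²θ cos 2φ` spans, within the symmetry class used below, the kernel of
`Δ + 6`, and `γY₁⁰ + aQ` is a solution for `α = β = 0`.

The unknown `Ψ = ∑ c_{ik} QⁱZᵏ`, with `Z ∼ cos θ` and `i + k` odd, is identified with its
coefficients in `ℓ¹`, on which `Ψ ↦ Ψ³` is a bounded cubic map. In this basis `Δ` is triangular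
and, after rescaling `Q` and `Z`, diagonally dominant away from `Q`; hence `Δ + 6` is invertible
once it is bordered by the `Q`-coordinate. Fixing that coordinate to be `a` and treating `α` as an
unknown, the implicit function theorem gives a curve of solutions parametrized by `β`. Along it the
`Y₄²`-coefficient leaves `0` with non-zero speed, because `Ψ³` contains a non-zero multiple of
`QZ²`, which has spherical degree `4`.

By orthogonality the coefficient of degree `n` only sees monomials of spherical degree
`2i + k ≥ n`, which the rescaling makes exponentially small: this is the Gevrey bound.
-/

section SummableSequences

variable {ι F : Type*} [NormedAddCommGroup F] [NormedSpace ℝ F]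

/-- The Banach space `ℓ¹(ι)`. -/
abbrev Ell1 (ι : Type*) : Type _ := lp (fun _ : ι => ℝ) 1

open Classical in
/-- The standard basis vectors of `ℓ¹(ι)`. -/
def basisVec (i : ι) : Ell1 ι := lp.single 1 i 1

theorem norm_basisVec (i : ι) : ‖basisVec i‖ = 1 := by
  classical rw [basisVec, lp.norm_single one_pos, norm_one]

theorem summable_norm_ell1 (f : Ell1 ι) : Summable fun i => ‖f i‖ := by
  simpa using (lp.hasSum_norm (p := 1) (by simp) f).summable

theorem norm_ell1_eq_tsum (f : Ell1 ι) : ‖f‖ = ∑' i, ‖f i‖ := by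
  simpa using lp.norm_eq_tsum_rpow (p := 1) (by simp) f

theorem norm_ell1_smul_le (f : Ell1 ι) {x : ι → F} {C : ℝ} (hx : ∀ i, ‖x i‖ ≤ C) (i : ι) :
    ‖f i • x i‖ ≤ ‖f i‖ * C := by
  rw [norm_smul]
  exact mul_le_mul_of_nonneg_left (hx i) (norm_nonneg _)

theorem norm_tsum_ell1_smul_le (f : Ell1 ι) {x : ι → F} {C : ℝ} (hx : ∀ i, ‖x i‖ ≤ C) :
    ‖∑' i, f i • x i‖ ≤ C * ‖f‖ := by
  rw [norm_ell1_eq_tsum, mul_comm, ← tsum_mul_right]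
  exact tsum_of_norm_bounded ((summable_norm_ell1 f).mul_right C).hasSum (norm_ell1_smul_le f hx)

theorem ell1_continuousLinearMap_ext {A B : Ell1 ι →L[ℝ] F}
    (h : ∀ i, A (basisVec i) = B (basisVec i)) : A = B := by
  classical
  refine lp.ext_continuousLinearMap (by simp) fun i => ?_
  ext
  simpa [basisVec, Subsingleton.elim _ (Classical.decEq ι)] using h i

variable [CompleteSpace F]

theorem summable_ell1_smul (f : Ell1 ι) {x : ι → F} {C : ℝ} (hx : ∀ i, ‖x i‖ ≤ C) :
    Summable fun i => f i • x i :=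
  .of_norm_bounded ((summable_norm_ell1 f).mul_right C) (norm_ell1_smul_le f hx)

/-- The continuous linear map `f ↦ ∑ f i • x i` on `ℓ¹(ι)` given by a bounded family `x`. -/
def ell1Lift (x : ι → F) (C : ℝ) (hx : ∀ i, ‖x i‖ ≤ C) : Ell1 ι →L[ℝ] F :=
  LinearMap.mkContinuous
    { toFun := fun f => ∑' i, f i • x i
      map_add' := fun f g => by
        rw [← (summable_ell1_smul f hx).tsum_add (summable_ell1_smul g hx)]
        simp only [lp.coeFn_add, Pi.add_apply, add_smul]
      map_smul' := fun c f => by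
        rw [RingHom.id_apply, ← (summable_ell1_smul f hx).tsum_const_smul c]
        simp only [lp.coeFn_smul, Pi.smul_apply, smul_assoc] }
    C fun f => norm_tsum_ell1_smul_le f hx

theorem ell1Lift_apply (x : ι → F) (C : ℝ) (hx : ∀ i, ‖x i‖ ≤ C) (f : Ell1 ι) :
    ell1Lift x C hx f = ∑' i, f i • x i := rfl

theorem ell1Lift_basisVec (x : ι → F) (C : ℝ) (hx : ∀ i, ‖x i‖ ≤ C) (i : ι) :
    ell1Lift x C hx (basisVec i) = x i := by
  classical
  rw [ell1Lift_apply, tsum_eq_single i, basisVec, lp.single_apply_self, one_smul]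
  intro j hj
  rw [basisVec, lp.single_apply_ne 1 i _ hj, zero_smul]

theorem norm_ell1Lift_le (x : ι → F) {C : ℝ} (hC : 0 ≤ C) (hx : ∀ i, ‖x i‖ ≤ C) :
    ‖ell1Lift x C hx‖ ≤ C :=
  LinearMap.mkContinuous_norm_le _ hC _

theorem norm_apply_le_of_basisVec (A : Ell1 ι →L[ℝ] F) {C : ℝ}
    (h : ∀ i, ‖A (basisVec i)‖ ≤ C) (f : Ell1 ι) : ‖A f‖ ≤ C * ‖f‖ := by
  have hA : A = ell1Lift (fun i => A (basisVec i)) C h :=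
    ell1_continuousLinearMap_ext fun i => (ell1Lift_basisVec _ _ h i).symm
  rw [hA]
  exact norm_tsum_ell1_smul_le f h

/-- The continuous trilinear map on `ℓ¹(ι)` extending a ternary operation on the indices. -/
def ell1Trilinear (op : ι → ι → ι → ι) : Ell1 ι →L[ℝ] Ell1 ι →L[ℝ] Ell1 ι →L[ℝ] Ell1 ι :=
  ell1Lift
    (fun i => ell1Lift
      (fun j => ell1Lift (fun k => basisVec (op i j k)) 1 fun _ => (norm_basisVec _).le) 1
      fun _ => norm_ell1Lift_le _ zero_le_one _) 1
    fun _ => norm_ell1Lift_le _ zero_le_one _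

theorem ell1Trilinear_basisVec (op : ι → ι → ι → ι) (i j k : ι) :
    ell1Trilinear op (basisVec i) (basisVec j) (basisVec k) = basisVec (op i j k) := by
  rw [ell1Trilinear, ell1Lift_basisVec, ell1Lift_basisVec, ell1Lift_basisVec]

theorem map_ell1Trilinear {op : ι → ι → ι → ι} {χ : Ell1 ι →L[ℝ] ℝ}
    (hχ : ∀ i j k, χ (basisVec (op i j k)) =
      χ (basisVec i) * χ (basisVec j) * χ (basisVec k)) (f g h : Ell1 ι) :
    χ (ell1Trilinear op f g h) = χ f * χ g * χ h := by
  have on_basis (i j : ι) :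
      χ ∘L ell1Trilinear op (basisVec i) (basisVec j) = (χ (basisVec i) * χ (basisVec j)) • χ :=
    ell1_continuousLinearMap_ext fun k => by
      simp [ell1Trilinear_basisVec, hχ]
  have on_basis_left (i : ι) :
      χ ∘L (ell1Trilinear op (basisVec i)).flip h = (χ (basisVec i) * χ h) • χ :=
    ell1_continuousLinearMap_ext fun j => by
      have := congr($(on_basis i j) h)
      simp only [ContinuousLinearMap.comp_apply, smul_apply, smul_eq_mul,
        ContinuousLinearMap.flip_apply] at this ⊢
      linarith
  have all : χ ∘L ((ell1Trilinear op).flip g).flip h = (χ g * χ h) • χ :=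
    ell1_continuousLinearMap_ext fun i => by
      have := congr($(on_basis_left i) g)
      simp only [ContinuousLinearMap.comp_apply, smul_apply, smul_eq_mul,
        ContinuousLinearMap.flip_apply] at this ⊢
      linarith
  have := congr($all f)
  simp only [ContinuousLinearMap.comp_apply, smul_apply, smul_eq_mul,
    ContinuousLinearMap.flip_apply] at this
  linarith

end SummableSequences

section DiagonallyDominant

variable {ι : Type*} {d : ι → ℝ} {L : ι → Ell1 ι} {r : ℝ}

theorem norm_inv_smul_le_of_dominant (hd : ∀ i, 1 ≤ |d i|) (hL : ∀ i, ‖L i‖ ≤ r * |d i|) (i : ι) :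
    ‖(d i)⁻¹ • L i‖ ≤ r := by
  rw [norm_smul, norm_inv, Real.norm_eq_abs, inv_mul_le_iff₀ (one_pos.trans_le (hd i)), mul_comm]
  exact hL i

theorem norm_inv_smul_basisVec_le_one (hd : ∀ i, 1 ≤ |d i|) (i : ι) :
    ‖(d i)⁻¹ • basisVec i‖ ≤ 1 := by
  rw [norm_smul, norm_basisVec, mul_one, norm_inv, Real.norm_eq_abs]
  exact inv_le_one_of_one_le₀ (hd i)

/- Factor `T = (1 + N) D` with `D` diagonal and `‖N‖ ≤ r`; then `K = D⁻¹ (1 + N)⁻¹`, and `T` itself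
is only evaluated on basis vectors because `D` need not be bounded. -/
theorem exists_inverse_of_diagonallyDominant [Nonempty ι] (hr : r < 1) (hd : ∀ i, 1 ≤ |d i|)
    (hL : ∀ i, ‖L i‖ ≤ r * |d i|) :
    ∃ K : Ell1 ι →L[ℝ] Ell1 ι, (∀ i, K (d i • basisVec i + L i) = basisVec i) ∧
      ∀ A B : Ell1 ι →L[ℝ] ℝ,
        (∀ i, A (basisVec i) = B (d i • basisVec i + L i)) → ∀ f, A (K f) = B f := by
  have d_ne (i : ι) : d i ≠ 0 := abs_pos.1 (one_pos.trans_le (hd i))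
  have r_nonneg : 0 ≤ r := by
    obtain ⟨i⟩ := ‹Nonempty ι›
    exact (norm_nonneg _).trans (norm_inv_smul_le_of_dominant hd hL i)
  let Dinv : Ell1 ι →L[ℝ] Ell1 ι :=
    ell1Lift (fun i => (d i)⁻¹ • basisVec i) 1 (norm_inv_smul_basisVec_le_one hd)
  let N : Ell1 ι →L[ℝ] Ell1 ι :=
    ell1Lift (fun i => (d i)⁻¹ • L i) r (norm_inv_smul_le_of_dominant hd hL)
  have Dinv_basisVec (i : ι) : Dinv (basisVec i) = (d i)⁻¹ • basisVec i := ell1Lift_basisVec _ _ _ i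
  have N_basisVec (i : ι) : N (basisVec i) = (d i)⁻¹ • L i := ell1Lift_basisVec _ _ _ i
  have N_norm : ‖-N‖ < 1 := by
    rw [norm_neg]
    exact (norm_ell1Lift_le _ r_nonneg _).trans_lt hr
  let U : (Ell1 ι →L[ℝ] Ell1 ι)ˣ := Units.oneSub (-N) N_norm
  have U_apply (f : Ell1 ι) : (U : Ell1 ι →L[ℝ] Ell1 ι) f = f + N f := by simp [U]
  refine ⟨Dinv ∘L ↑U⁻¹, fun i => ?_, fun A B h f => ?_⟩
  · have hT : d i • basisVec i + L i = (U : Ell1 ι →L[ℝ] Ell1 ι) (d i • basisVec i) := by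
      rw [U_apply, map_smul, N_basisVec, smul_inv_smul₀ (d_ne i)]
    have hU : (↑U⁻¹ : Ell1 ι →L[ℝ] Ell1 ι) ((U : Ell1 ι →L[ℝ] Ell1 ι) (d i • basisVec i)) =
        d i • basisVec i := congr($(U.inv_mul) (d i • basisVec i))
    rw [ContinuousLinearMap.comp_apply, hT, hU, map_smul, Dinv_basisVec, smul_inv_smul₀ (d_ne i)]
  · have hAB : A ∘L Dinv = B ∘L (U : Ell1 ι →L[ℝ] Ell1 ι) :=
      ell1_continuousLinearMap_ext fun i => by
        rw [ContinuousLinearMap.comp_apply, ContinuousLinearMap.comp_apply, Dinv_basisVec, map_smul,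
          h, ← map_smul, smul_add, inv_smul_smul₀ (d_ne i), U_apply, N_basisVec]
    calc A (Dinv ((↑U⁻¹ : Ell1 ι →L[ℝ] Ell1 ι) f))
        = B ((U : Ell1 ι →L[ℝ] Ell1 ι) ((↑U⁻¹ : Ell1 ι →L[ℝ] Ell1 ι) f)) :=
          congr($hAB ((↑U⁻¹ : Ell1 ι →L[ℝ] Ell1 ι) f))
      _ = B f := congr(B ($(U.mul_inv) f))

end DiagonallyDominant

section BorderedEquation

variable {E : Type*} [NormedAddCommGroup E] [NormedSpace ℝ E]

/-- The linear isomorphism `(r, a) ↦ (r - a • w, Π r)`: the identity bordered by a vector `w` and a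
functional `Π` with `Π w ≠ 0`. -/
def borderedEquiv (Pr : E →L[ℝ] ℝ) (w : E) (hw : Pr w ≠ 0) : (E × ℝ) ≃L[ℝ] (E × ℝ) :=
  .equivOfInverse
    ((.fst ℝ E ℝ - (ContinuousLinearMap.snd ℝ E ℝ).smulRight w).prod (Pr ∘L .fst ℝ E ℝ))
    (let a : E × ℝ →L[ℝ] ℝ := (Pr w)⁻¹ • (.snd ℝ E ℝ - Pr ∘L .fst ℝ E ℝ)
     (.fst ℝ E ℝ + a.smulRight w).prod a)
    (fun ⟨r, a⟩ => by simp [mul_comm, hw])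
    (fun ⟨r, a⟩ => by
      change (r + ((Pr w)⁻¹ * (a - Pr r)) • w - ((Pr w)⁻¹ * (a - Pr r)) • w,
        Pr (r + ((Pr w)⁻¹ * (a - Pr r)) • w)) = (r, a)
      rw [add_sub_cancel_right, map_add, map_smul, smul_eq_mul, mul_right_comm, inv_mul_cancel₀ hw,
        one_mul, add_sub_cancel])

theorem borderedEquiv_symm_fst (Pr : E →L[ℝ] ℝ) (w : E) (hw : Pr w ≠ 0) (y : E) :
    ((borderedEquiv Pr w hw).symm (y, 0)).1 = y - ((Pr w)⁻¹ * Pr y) • w := by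
  change y + ((Pr w)⁻¹ * (0 - Pr y)) • w = _
  module

/-- The bordered equation `ψ = K (α ψ + β N(ψ) + s)`, `Π ψ = const`, written as the level sets of a
map of `(β, (ψ, α))`. -/
def borderedMap (K : E →L[ℝ] E) (Pr : E →L[ℝ] ℝ) (N : E → E) (s : E) (x : ℝ × E × ℝ) : E × ℝ :=
  (x.2.1 - K (x.2.2 • x.2.1 + x.1 • N x.2.1 + s), Pr x.2.1)

theorem hasStrictFDerivAt_borderedMap (K : E →L[ℝ] E) (Pr : E →L[ℝ] ℝ) {N : E → E} {N' : E →L[ℝ] E}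
    {ψ₀ : E} (hN : HasStrictFDerivAt N N' ψ₀) (s : E) (hw : Pr (K ψ₀) ≠ 0) :
    HasStrictFDerivAt (borderedMap K Pr N s)
      ((ContinuousLinearMap.toSpanSingleton ℝ (-K (N ψ₀), (0 : ℝ))).coprod
        (borderedEquiv Pr (K ψ₀) hw : E × ℝ →L[ℝ] E × ℝ)) (0, ψ₀, 0) := by
  have hψ : HasStrictFDerivAt (fun x : ℝ × E × ℝ => x.2.1) _ (0, ψ₀, 0) :=
    (hasStrictFDerivAt_snd (𝕜 := ℝ)).fst
  have hα : HasStrictFDerivAt (fun x : ℝ × E × ℝ => x.2.2) _ (0, ψ₀, 0) :=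
    (hasStrictFDerivAt_snd (𝕜 := ℝ)).snd
  have hβ : HasStrictFDerivAt (fun x : ℝ × E × ℝ => x.1) _ (0, ψ₀, 0) :=
    hasStrictFDerivAt_fst (𝕜 := ℝ)
  have hNψ : HasStrictFDerivAt (fun x : ℝ × E × ℝ => N x.2.1) _ (0, ψ₀, 0) :=
    HasStrictFDerivAt.comp (0, ψ₀, 0) (g := N) hN hψ
  have hsum := ((hα.fun_smul hψ).fun_add (hβ.fun_smul hNψ)).fun_add
    (hasStrictFDerivAt_const s _)
  refine ((hψ.fun_sub (K.hasStrictFDerivAt.comp _ hsum)).prodMk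
    (Pr.hasStrictFDerivAt.comp _ hψ)).congr_fderiv (ContinuousLinearMap.ext fun ⟨b, r, a⟩ => ?_)
  refine Prod.ext ?_ ?_
  · change r - K ((0 : ℝ) • r + a • ψ₀ + ((0 : ℝ) • N' r + b • N ψ₀) + 0) =
      b • -K (N ψ₀) + (r - a • K ψ₀)
    simp only [map_add, map_smul, map_zero]
    module
  · change Pr r = b • 0 + Pr r
    rw [smul_zero, zero_add]

variable [CompleteSpace E]

theorem exists_bordered_solution_curve (K : E →L[ℝ] E) (Pr : E →L[ℝ] ℝ) {N : E → E}
    {N' : E →L[ℝ] E} {ψ₀ s : E} (hN : HasStrictFDerivAt N N' ψ₀) (hs : K s = ψ₀)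
    (hw : Pr (K ψ₀) ≠ 0) :
    ∃ (ψ : ℝ → E) (α : ℝ → ℝ) (c : ℝ), ψ 0 = ψ₀ ∧ HasDerivAt ψ (K (N ψ₀) - c • K ψ₀) 0 ∧
      ∀ᶠ β in nhds 0, ψ β = K (α β • ψ β + β • N (ψ β) + s) ∧ Pr (ψ β) = Pr ψ₀ := by
  have hF := hasStrictFDerivAt_borderedMap K Pr hN s hw
  let e := borderedEquiv Pr (K ψ₀) hw
  have hinr : ((ContinuousLinearMap.toSpanSingleton ℝ (-K (N ψ₀), (0 : ℝ))).coprod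
      (e : E × ℝ →L[ℝ] E × ℝ)) ∘L .inr ℝ ℝ (E × ℝ) = e :=
    ContinuousLinearMap.coprod_comp_inr _ _
  have hinv := hinr ▸ ContinuousLinearMap.isInvertible_equiv (f := e)
  let g := hF.implicitFunctionOfProdDomain hinv
  have hg : HasDerivAt g (e.symm (K (N ψ₀), 0)) 0 := by
    have := (hF.hasStrictFDerivAt_implicitFunctionOfProdDomain hinv).hasFDerivAt.hasDerivAt
    rw [hinr] at this
    convert! this using 1
    simp [← map_neg]
  have hg₀ : g 0 = (ψ₀, 0) :=
    (hF.eventually_apply_eq_iff_implicitFunctionOfProdDomain hinv).self_of_nhds.1 rfl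
  have hbase : borderedMap K Pr N s (0, ψ₀, 0) = (0, Pr ψ₀) := by simp [borderedMap, hs]
  refine ⟨fun β => (g β).1, fun β => (g β).2, (Pr (K ψ₀))⁻¹ * Pr (K (N ψ₀)),
    congr(($hg₀).1), ?_, ?_⟩
  · rw [← borderedEquiv_symm_fst Pr (K ψ₀) hw]
    exact hg.fst
  · filter_upwards [hF.eventually_apply_implicitFunctionOfProdDomain hinv] with β hβ
    rw [hbase, borderedMap, Prod.mk.injEq, sub_eq_zero] at hβ
    exact hβ

/- The initial velocity of the solution curve is `K (N ψ₀)` modulo `K ψ₀`, so the functional `Λ`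
varies along it. -/
theorem exists_bordered_solution (K : E →L[ℝ] E) (Pr Λ : E →L[ℝ] ℝ) {N : E → E} {N' : E →L[ℝ] E}
    {ψ₀ s : E} (hN : HasStrictFDerivAt N N' ψ₀) (hs : K s = ψ₀) (hw : Pr (K ψ₀) ≠ 0)
    (hΛ : Λ (K ψ₀) = 0) (hΛN : Λ (K (N ψ₀)) ≠ 0) {δ : ℝ} (hδ : 0 < δ) :
    ∃ (ψ : E) (α β : ℝ), ψ = K (α • ψ + β • N ψ + s) ∧ Pr ψ = Pr ψ₀ ∧ ‖ψ - ψ₀‖ < δ ∧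
      Λ ψ ≠ Λ ψ₀ := by
  obtain ⟨ψ, α, c, hψ₀, hψ', hψ⟩ := exists_bordered_solution_curve K Pr hN hs hw
  have hΛψ : HasDerivAt (fun β => Λ (ψ β)) (Λ (K (N ψ₀))) 0 := by
    have := Λ.hasFDerivAt.comp_hasDerivAt 0 hψ'
    rwa [map_sub, map_smul, hΛ, smul_zero, sub_zero] at this
  have hmove : ∀ᶠ β in nhdsWithin 0 {0}ᶜ, Λ (ψ β) ≠ Λ ψ₀ := hΛψ.eventually_ne hΛN
  have hnear : ∀ᶠ β in nhds 0, ‖ψ β - ψ₀‖ < δ := by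
    have := hψ'.continuousAt.eventually (Metric.ball_mem_nhds _ hδ)
    simpa only [Metric.mem_ball, dist_eq_norm, hψ₀] using this
  obtain ⟨β, hne, ⟨heq, hPr⟩, hlt⟩ :=
    (hmove.and ((hψ.and hnear).filter_mono nhdsWithin_le_nhds)).exists
  exact ⟨ψ β, α β, β, heq, hPr, hlt, hne⟩

end BorderedEquation

section SmoothFamilies

open scoped ContDiff

variable {E : Type*} [NormedAddCommGroup E] [NormedSpace ℝ E]

/-- Smooth functions all of whose derivatives grow at most geometrically with the order, uniformly
on `E`: `‖Dʲ f‖ ≤ A bʲ`, as for trigonometric polynomials. -/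
structure GeometricDerivBound (A b : ℝ) (f : E → ℝ) : Prop where
  contDiff : ContDiff ℝ ∞ f
  norm_iteratedFDeriv_le : ∀ j x, ‖iteratedFDeriv ℝ j f x‖ ≤ A * b ^ j

namespace GeometricDerivBound

theorem const (c : ℝ) : GeometricDerivBound |c| 0 fun _ : E => c where
  contDiff := contDiff_const
  norm_iteratedFDeriv_le j x := by
    rcases eq_or_ne j 0 with rfl | hj
    · simp
    · simp [iteratedFDeriv_const_of_ne hj, hj]

theorem mul {A A' b b' : ℝ} {f g : E → ℝ} (hf : GeometricDerivBound A b f)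
    (hg : GeometricDerivBound A' b' g) (hA : 0 ≤ A) (hb : 0 ≤ b) :
    GeometricDerivBound (A * A') (b + b') fun x => f x * g x where
  contDiff := hf.contDiff.mul hg.contDiff
  norm_iteratedFDeriv_le j x :=
    calc ‖iteratedFDeriv ℝ j (fun y => f y * g y) x‖
        ≤ ∑ i ∈ Finset.range (j + 1), (j.choose i : ℝ) * ‖iteratedFDeriv ℝ i f x‖ *
            ‖iteratedFDeriv ℝ (j - i) g x‖ :=
          norm_iteratedFDeriv_mul_le hf.contDiff hg.contDiff x (mod_cast le_top)
      _ ≤ ∑ i ∈ Finset.range (j + 1), (j.choose i : ℝ) * (A * b ^ i) * (A' * b' ^ (j - i)) := by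
          gcongr
          · exact hf.norm_iteratedFDeriv_le _ x
          · exact hg.norm_iteratedFDeriv_le _ x
      _ = A * A' * (b + b') ^ j := by
          rw [add_pow, Finset.mul_sum]
          exact Finset.sum_congr rfl fun i _ => by ring

theorem pow {A b : ℝ} {f : E → ℝ} (hf : GeometricDerivBound A b f) (hA : 0 ≤ A) (hb : 0 ≤ b)
    (n : ℕ) : GeometricDerivBound (A ^ n) (n * b) fun x => f x ^ n := by
  induction n with
  | zero => simpa using const 1
  | succ n ih =>
    simpa only [pow_succ, Nat.cast_add, Nat.cast_one, add_mul, one_mul] using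
      ih.mul hf (pow_nonneg hA n) (mul_nonneg n.cast_nonneg hb)

theorem comp_clm {b : ℝ} {f : ℝ → ℝ} (hf : ContDiff ℝ ∞ f)
    (hbound : ∀ j x, |iteratedDeriv j f x| ≤ 1) {l : E →L[ℝ] ℝ} (hl : ‖l‖ ≤ b) :
    GeometricDerivBound 1 b fun x => f (l x) where
  contDiff := hf.comp l.contDiff
  norm_iteratedFDeriv_le j x := by
    change ‖iteratedFDeriv ℝ j (f ∘ l) x‖ ≤ _
    rw [l.iteratedFDeriv_comp_right hf x (mod_cast le_top)]
    refine (ContinuousMultilinearMap.norm_compContinuousLinearMap_le _ _).trans ?_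
    rw [norm_iteratedFDeriv_eq_norm_iteratedDeriv, Finset.prod_const, Finset.card_univ,
      Fintype.card_fin]
    exact mul_le_mul (hbound j _) (pow_le_pow_left₀ (norm_nonneg l) hl j)
      (by positivity) zero_le_one

end GeometricDerivBound

/-- Families of smooth functions with each derivative bounded uniformly over the family and over
`E`; these are the families that can be summed against `ℓ¹` coefficients. -/
structure UniformlySmooth {ι : Type*} (g : ι → E → ℝ) : Prop where
  contDiff : ∀ i, ContDiff ℝ ∞ (g i)
  exists_bound : ∀ j : ℕ, ∃ C, ∀ i x, ‖iteratedFDeriv ℝ j (g i) x‖ ≤ C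

namespace UniformlySmooth

variable {ι : Type*} {g : ι → E → ℝ}

theorem dirDeriv (hg : UniformlySmooth g) (v : E) :
    UniformlySmooth fun i x => fderiv ℝ (g i) x v where
  contDiff i := ((hg.contDiff i).fderiv_right le_rfl).clm_apply contDiff_const
  exists_bound j := by
    obtain ⟨C, hC⟩ := hg.exists_bound (j + 1)
    refine ⟨‖v‖ * C, fun i x => (norm_iteratedFDeriv_clm_apply_const
      ((hg.contDiff i).fderiv_right (m := ∞) le_rfl).contDiffAt (mod_cast le_top)).trans ?_⟩
    rw [norm_iteratedFDeriv_fderiv]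
    exact mul_le_mul_of_nonneg_left (hC i x) (norm_nonneg v)

theorem exists_norm_le (hg : UniformlySmooth g) : ∃ C, ∀ i x, ‖g i x‖ ≤ C := by
  simpa only [norm_iteratedFDeriv_zero] using hg.exists_bound 0

/-- The functional `f ↦ ∑ f i * g i x` on `ℓ¹(ι)`. -/
def eval (hg : UniformlySmooth g) (x : E) : Ell1 ι →L[ℝ] ℝ :=
  ell1Lift (fun i => g i x) hg.exists_norm_le.choose fun i => hg.exists_norm_le.choose_spec i x

theorem eval_basisVec (hg : UniformlySmooth g) (x : E) (i : ι) :
    hg.eval x (basisVec i) = g i x :=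
  ell1Lift_basisVec _ _ _ i

theorem contDiff_eval (hg : UniformlySmooth g) (f : Ell1 ι) :
    ContDiff ℝ ∞ fun x => hg.eval x f := by
  choose C hC using hg.exists_bound
  refine contDiff_tsum (v := fun j i => ‖f i‖ * C j) (fun i => contDiff_const.mul (hg.contDiff i))
    (fun j _ => (summable_norm_ell1 f).mul_right (C j)) fun j i x hj => ?_
  change ‖iteratedFDeriv ℝ j (f i • g i) x‖ ≤ _
  rw [iteratedFDeriv_const_smul_apply ((hg.contDiff i).of_le (mod_cast hj)).contDiffAt, norm_smul]
  exact mul_le_mul_of_nonneg_left (hC j i x) (norm_nonneg _)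

theorem fderiv_eval (hg : UniformlySmooth g) (f : Ell1 ι) (x v : E) :
    fderiv ℝ (fun y => hg.eval y f) x v = (hg.dirDeriv v).eval x f := by
  obtain ⟨C, hC⟩ := hg.exists_bound 1
  have differentiable (i : ι) : Differentiable ℝ (g i) :=
    (hg.contDiff i).differentiable (by simp)
  have fderiv_smul (i : ι) (y : E) :
      fderiv ℝ (fun z => f i • g i z) y = f i • fderiv ℝ (g i) y :=
    fderiv_fun_const_smul (differentiable i y) (f i)
  have fderiv_le (i : ι) (y : E) : ‖fderiv ℝ (fun z => f i • g i z) y‖ ≤ ‖f i‖ * C := by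
    rw [fderiv_smul, norm_smul, ← norm_iteratedFDeriv_one]
    exact mul_le_mul_of_nonneg_left (hC i y) (norm_nonneg _)
  have summable_bound := (summable_norm_ell1 f).mul_right C
  have summable_at : Summable fun i => f i • g i x :=
    summable_ell1_smul f fun i => hg.exists_norm_le.choose_spec i x
  have hasFDerivAt : HasFDerivAt (fun y => hg.eval y f) (∑' i, f i • fderiv ℝ (g i) x) x := by
    simp only [← fderiv_smul]
    exact hasFDerivAt_tsum summable_bound
      (fun i y => ((differentiable i).const_smul (f i) y).hasFDerivAt) fderiv_le summable_at x
  have summable_fderiv : Summable fun i => f i • fderiv ℝ (g i) x :=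
    .of_norm_bounded summable_bound fun i => fderiv_smul i x ▸ fderiv_le i x
  rw [hasFDerivAt.fderiv]
  exact (ContinuousLinearMap.apply ℝ ℝ v).map_tsum summable_fderiv

end UniformlySmooth
end SmoothFamilies

section SphericalCalculus

namespace SphSmooth

variable {u v : SphereFun}

theorem hasDerivAt_fderiv_theta (hu : SphSmooth u) (θ φ : ℝ) :
    HasDerivAt (fun t => u t φ) (fderiv ℝ (Function.uncurry u) (θ, φ) (1, 0)) θ :=
  HasFDerivAt.comp_hasDerivAt (l := Function.uncurry u) (f := fun t => (t, φ)) θ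
    (ContDiff.differentiable hu (by simp) (θ, φ)).hasFDerivAt
    ((hasDerivAt_id θ).prodMk (hasDerivAt_const θ φ))

theorem hasDerivAt_fderiv_phi (hu : SphSmooth u) (θ φ : ℝ) :
    HasDerivAt (fun p => u θ p) (fderiv ℝ (Function.uncurry u) (θ, φ) (0, 1)) φ :=
  HasFDerivAt.comp_hasDerivAt (l := Function.uncurry u) (f := fun p => (θ, p)) φ
    (ContDiff.differentiable hu (by simp) (θ, φ)).hasFDerivAt
    ((hasDerivAt_const φ θ).prodMk (hasDerivAt_id φ))

theorem dTheta_eq_fderiv (hu : SphSmooth u) (θ φ : ℝ) :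
    dTheta u θ φ = fderiv ℝ (Function.uncurry u) (θ, φ) (1, 0) :=
  (hu.hasDerivAt_fderiv_theta θ φ).deriv

theorem dPhi_eq_fderiv (hu : SphSmooth u) (θ φ : ℝ) :
    dPhi u θ φ = fderiv ℝ (Function.uncurry u) (θ, φ) (0, 1) :=
  (hu.hasDerivAt_fderiv_phi θ φ).deriv

theorem hasDerivAt_theta (hu : SphSmooth u) (θ φ : ℝ) :
    HasDerivAt (fun t => u t φ) (dTheta u θ φ) θ :=
  hu.dTheta_eq_fderiv θ φ ▸ hu.hasDerivAt_fderiv_theta θ φ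

theorem hasDerivAt_phi (hu : SphSmooth u) (θ φ : ℝ) :
    HasDerivAt (fun p => u θ p) (dPhi u θ φ) φ :=
  hu.dPhi_eq_fderiv θ φ ▸ hu.hasDerivAt_fderiv_phi θ φ

theorem smooth_dTheta (hu : SphSmooth u) : SphSmooth (dTheta u) := by
  have h : Function.uncurry (dTheta u) =
      fun x => fderiv ℝ (Function.uncurry u) x (1, 0) :=
    funext fun x => hu.dTheta_eq_fderiv x.1 x.2
  rw [SphSmooth, h]
  exact (ContDiff.fderiv_right hu le_rfl).clm_apply contDiff_const

theorem smooth_dPhi (hu : SphSmooth u) : SphSmooth (dPhi u) := by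
  have h : Function.uncurry (dPhi u) =
      fun x => fderiv ℝ (Function.uncurry u) x (0, 1) :=
    funext fun x => hu.dPhi_eq_fderiv x.1 x.2
  rw [SphSmooth, h]
  exact (ContDiff.fderiv_right hu le_rfl).clm_apply contDiff_const

theorem pow (hu : SphSmooth u) (n : ℕ) : SphSmooth fun θ φ => u θ φ ^ n :=
  ContDiff.pow hu n

end SphSmooth

theorem lapS_eq_of_hasDerivAt {u uθ uφ : SphereFun} {θ φ uθθ uφφ : ℝ} (hθ : Real.sin θ ≠ 0)
    (h₁ : ∀ t, HasDerivAt (fun t => u t φ) (uθ t φ) t)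
    (h₂ : ∀ p, HasDerivAt (fun p => u θ p) (uφ θ p) p)
    (h₁₁ : HasDerivAt (fun t => uθ t φ) uθθ θ) (h₂₂ : HasDerivAt (fun p => uφ θ p) uφφ φ) :
    lapS u θ φ = uθθ + Real.cos θ / Real.sin θ * uθ θ φ + uφφ / Real.sin θ ^ 2 := by
  have hdTheta : (fun t => Real.sin t * dTheta u t φ) = fun t => Real.sin t * uθ t φ :=
    funext fun t => congrArg _ (h₁ t).deriv
  have hdPhi : dPhi u θ = uφ θ := funext fun p => (h₂ p).deriv
  have hdPhi₂ : dPhi (dPhi u) θ φ = uφφ := by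
    change deriv (dPhi u θ) φ = _
    exact hdPhi ▸ h₂₂.deriv
  rw [lapS, hdPhi₂, hdTheta, ((Real.hasDerivAt_sin θ).fun_mul h₁₁).deriv]
  field_simp
  ring

/-- The pointwise inner product `∇u · ∇v` of tangential gradients, in coordinates. -/
def gradInner (u v : SphereFun) : SphereFun := fun θ φ =>
  dTheta u θ φ * dTheta v θ φ + dPhi u θ φ * dPhi v θ φ / Real.sin θ ^ 2

variable {u v : SphereFun} {θ φ : ℝ}

theorem SphSmooth.lapS_eq (hu : SphSmooth u) (hθ : Real.sin θ ≠ 0) :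
    lapS u θ φ = dTheta (dTheta u) θ φ + Real.cos θ / Real.sin θ * dTheta u θ φ +
      dPhi (dPhi u) θ φ / Real.sin θ ^ 2 :=
  lapS_eq_of_hasDerivAt hθ (fun t => hu.hasDerivAt_theta t φ) (fun p => hu.hasDerivAt_phi θ p)
    (hu.smooth_dTheta.hasDerivAt_theta θ φ) (hu.smooth_dPhi.hasDerivAt_phi θ φ)

theorem SphSmooth.lapS_mul (hu : SphSmooth u) (hv : SphSmooth v) (hθ : Real.sin θ ≠ 0) :
    lapS (fun t p => u t p * v t p) θ φ =
      lapS u θ φ * v θ φ + u θ φ * lapS v θ φ + 2 * gradInner u v θ φ := by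
  rw [hu.lapS_eq hθ, hv.lapS_eq hθ, gradInner, lapS_eq_of_hasDerivAt hθ
    (uθ := fun t p => dTheta u t p * v t p + u t p * dTheta v t p)
    (uφ := fun t p => dPhi u t p * v t p + u t p * dPhi v t p)
    (fun t => (hu.hasDerivAt_theta t φ).fun_mul (hv.hasDerivAt_theta t φ))
    (fun p => (hu.hasDerivAt_phi θ p).fun_mul (hv.hasDerivAt_phi θ p))
    (((hu.smooth_dTheta.hasDerivAt_theta θ φ).fun_mul (hv.hasDerivAt_theta θ φ)).fun_add
      ((hu.hasDerivAt_theta θ φ).fun_mul (hv.smooth_dTheta.hasDerivAt_theta θ φ)))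
    (((hu.smooth_dPhi.hasDerivAt_phi θ φ).fun_mul (hv.hasDerivAt_phi θ φ)).fun_add
      ((hu.hasDerivAt_phi θ φ).fun_mul (hv.smooth_dPhi.hasDerivAt_phi θ φ)))]
  ring

section Composition

variable {f f' : ℝ → ℝ}

theorem SphSmooth.dTheta_comp (hu : SphSmooth u) (hf : ∀ x, HasDerivAt f (f' x) x) (θ φ : ℝ) :
    dTheta (fun t p => f (u t p)) θ φ = f' (u θ φ) * dTheta u θ φ :=
  ((hf _).comp θ (hu.hasDerivAt_theta θ φ)).deriv

theorem SphSmooth.dPhi_comp (hu : SphSmooth u) (hf : ∀ x, HasDerivAt f (f' x) x) (θ φ : ℝ) :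
    dPhi (fun t p => f (u t p)) θ φ = f' (u θ φ) * dPhi u θ φ :=
  ((hf _).comp φ (hu.hasDerivAt_phi θ φ)).deriv

theorem SphSmooth.lapS_comp {f'' : ℝ → ℝ} (hu : SphSmooth u) (hf : ∀ x, HasDerivAt f (f' x) x)
    (hf' : ∀ x, HasDerivAt f' (f'' x) x) (hθ : Real.sin θ ≠ 0) :
    lapS (fun t p => f (u t p)) θ φ =
      f' (u θ φ) * lapS u θ φ + f'' (u θ φ) * gradInner u u θ φ := by
  rw [hu.lapS_eq hθ, gradInner, lapS_eq_of_hasDerivAt hθ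
    (uθ := fun t p => f' (u t p) * dTheta u t p) (uφ := fun t p => f' (u t p) * dPhi u t p)
    (fun t => (hf _).comp t (hu.hasDerivAt_theta t φ))
    (fun p => (hf _).comp p (hu.hasDerivAt_phi θ p))
    (((hf' _).comp θ (hu.hasDerivAt_theta θ φ)).fun_mul (hu.smooth_dTheta.hasDerivAt_theta θ φ))
    (((hf' _).comp φ (hu.hasDerivAt_phi θ φ)).fun_mul (hu.smooth_dPhi.hasDerivAt_phi θ φ))]
  simp only [Function.comp_apply]
  ring

theorem SphSmooth.advect_comp_eq_zero {w : SphereFun} (hu : SphSmooth u)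
    (hf : ∀ x, HasDerivAt f (f' x) x) (hw : ∀ t ∈ Set.Ioo 0 Real.pi, ∀ p, w t p = f (u t p))
    (hθ : θ ∈ Set.Ioo 0 Real.pi) : advect u w θ φ = 0 := by
  have hwθ : dTheta w θ φ = f' (u θ φ) * dTheta u θ φ := by
    rw [← hu.dTheta_comp hf]
    refine Filter.EventuallyEq.deriv_eq ?_
    filter_upwards [isOpen_Ioo.mem_nhds hθ] with t ht using hw t ht φ
  have hwφ : dPhi w θ φ = f' (u θ φ) * dPhi u θ φ := by
    rw [← hu.dPhi_comp hf]
    exact congrArg (deriv · φ) (funext (hw θ hθ))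
  rw [advect, hwθ, hwφ]
  ring

end Composition

theorem SphSmooth.lapS_pow (hu : SphSmooth u) (hθ : Real.sin θ ≠ 0) (n : ℕ) :
    lapS (fun t p => u t p ^ n) θ φ = n * u θ φ ^ (n - 1) * lapS u θ φ +
      n * (n - 1) * u θ φ ^ (n - 2) * gradInner u u θ φ := by
  have cast_pred : (n : ℝ) * ((n - 1 : ℕ) : ℝ) = n * (n - 1) := by
    cases n <;> simp
  rw [hu.lapS_comp (hasDerivAt_pow n) (fun x => (hasDerivAt_pow (n - 1) x).const_mul (n : ℝ)) hθ,
    ← mul_assoc (n : ℝ), cast_pred, Nat.sub_sub]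

theorem gradInner_pow_pow (hu : SphSmooth u) (hv : SphSmooth v) (m n : ℕ) :
    gradInner (fun t p => u t p ^ m) (fun t p => v t p ^ n) θ φ =
      m * u θ φ ^ (m - 1) * (n * v θ φ ^ (n - 1)) * gradInner u v θ φ := by
  rw [gradInner, gradInner, hu.dTheta_comp (f := (· ^ m)) (hasDerivAt_pow m),
    hv.dTheta_comp (f := (· ^ n)) (hasDerivAt_pow n),
    hu.dPhi_comp (f := (· ^ m)) (hasDerivAt_pow m), hv.dPhi_comp (f := (· ^ n)) (hasDerivAt_pow n)]
  ring

end SphericalCalculus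

section LaplacianOfSeries

namespace UniformlySmooth

variable {ι : Type*} {g : ι → ℝ × ℝ → ℝ}

theorem smooth_eval (hg : UniformlySmooth g) (f : Ell1 ι) :
    SphSmooth fun t p => hg.eval (t, p) f :=
  hg.contDiff_eval f

theorem dTheta_eval (hg : UniformlySmooth g) (f : Ell1 ι) :
    (dTheta fun t p => hg.eval (t, p) f) = fun t p => (hg.dirDeriv (1, 0)).eval (t, p) f :=
  funext₂ fun t p => ((hg.smooth_eval f).dTheta_eq_fderiv t p).trans (hg.fderiv_eval f (t, p) _)

theorem dPhi_eval (hg : UniformlySmooth g) (f : Ell1 ι) :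
    (dPhi fun t p => hg.eval (t, p) f) = fun t p => (hg.dirDeriv (0, 1)).eval (t, p) f :=
  funext₂ fun t p => ((hg.smooth_eval f).dPhi_eq_fderiv t p).trans (hg.fderiv_eval f (t, p) _)

/-- The functional on `ℓ¹(ι)` sending `f` to the Laplacian of `∑ f i * g i` at `(θ, φ)`. -/
def lapEval (hg : UniformlySmooth g) (θ φ : ℝ) : Ell1 ι →L[ℝ] ℝ :=
  ((hg.dirDeriv (1, 0)).dirDeriv (1, 0)).eval (θ, φ) +
    (Real.cos θ / Real.sin θ) • (hg.dirDeriv (1, 0)).eval (θ, φ) +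
    (Real.sin θ ^ 2)⁻¹ • ((hg.dirDeriv (0, 1)).dirDeriv (0, 1)).eval (θ, φ)

theorem lapS_eval (hg : UniformlySmooth g) (f : Ell1 ι) {θ : ℝ} (hθ : Real.sin θ ≠ 0) (φ : ℝ) :
    lapS (fun t p => hg.eval (t, p) f) θ φ = hg.lapEval θ φ f := by
  rw [(hg.smooth_eval f).lapS_eq hθ, hg.dTheta_eval, (hg.dirDeriv _).dTheta_eval, hg.dPhi_eval,
    (hg.dirDeriv _).dPhi_eval, div_eq_inv_mul (_ : ℝ) (Real.sin θ ^ 2)]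
  rfl

theorem lapEval_basisVec (hg : UniformlySmooth g) (i : ι) {θ : ℝ} (hθ : Real.sin θ ≠ 0) (φ : ℝ) :
    hg.lapEval θ φ (basisVec i) = lapS (fun t p => g i (t, p)) θ φ := by
  simp only [← hg.lapS_eval _ hθ, eval_basisVec]

end UniformlySmooth
end LaplacianOfSeries

section Monomials

open scoped ContDiff

/-- The factor by which the generators are scaled, so that a monomial of spherical degree `n` is
of size `scaleFactor ^ n`. -/
def scaleFactor : ℝ := 1 / 100

/-- The scaled generator of degree one: `cos θ`, proportional to `Y₁⁰`. -/
def axial : SphereFun := fun θ _ => scaleFactor * Real.cos θ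

/-- The scaled generator of degree two: `sin² θ cos 2φ`, proportional to `Y₂²`. -/
def sectoral : SphereFun := fun θ φ => scaleFactor ^ 2 * (Real.sin θ ^ 2 * Real.cos (2 * φ))

/-- The monomial `Qⁱ Zᵏ` in the generators `Q = sectoral`, `Z = axial`. -/
def monomial (i k : ℕ) : SphereFun := fun θ φ => sectoral θ φ ^ i * axial θ φ ^ k

/-- The exponents `(i, k)` of the monomials `Qⁱ Zᵏ` with `i + k` odd. They are closed under triple
products, and `(1, 0)` is the only one of spherical degree two, so that `Q` alone spans the kernel
of `Δ + 6`. -/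
abbrev OddExponent := {p : ℕ × ℕ // Odd (p.1 + p.2)}

theorem scaleFactor_pos : 0 < scaleFactor := by norm_num [scaleFactor]

theorem geometricDerivBound_axial :
    GeometricDerivBound scaleFactor 1 (Function.uncurry axial) := by
  have cos_theta : GeometricDerivBound 1 1 fun x : ℝ × ℝ => Real.cos x.1 :=
    .comp_clm Real.contDiff_cos Real.abs_iteratedDeriv_cos_le_one
      (ContinuousLinearMap.norm_fst_le ℝ ℝ ℝ)
  have h := (GeometricDerivBound.const scaleFactor).mul cos_theta (abs_nonneg _) le_rfl
  rwa [abs_of_pos scaleFactor_pos, mul_one, zero_add] at h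

theorem geometricDerivBound_sectoral :
    GeometricDerivBound (scaleFactor ^ 2) 4 (Function.uncurry sectoral) := by
  have sin_theta : GeometricDerivBound 1 1 fun x : ℝ × ℝ => Real.sin x.1 :=
    .comp_clm (l := .fst ℝ ℝ ℝ) Real.contDiff_sin Real.abs_iteratedDeriv_sin_le_one
      (ContinuousLinearMap.norm_fst_le ℝ ℝ ℝ)
  have norm_two_snd : ‖(2 : ℝ) • ContinuousLinearMap.snd ℝ ℝ ℝ‖ ≤ 2 := by
    rw [norm_smul, Real.norm_two]
    linarith [ContinuousLinearMap.norm_snd_le ℝ ℝ ℝ]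
  have cos_two_phi : GeometricDerivBound 1 2 fun x : ℝ × ℝ => Real.cos (2 * x.2) := by
    simpa only [smul_apply, ContinuousLinearMap.coe_snd', smul_eq_mul] using
      GeometricDerivBound.comp_clm Real.contDiff_cos Real.abs_iteratedDeriv_cos_le_one norm_two_snd
  have h := (GeometricDerivBound.const (scaleFactor ^ 2)).mul
    ((sin_theta.pow zero_le_one zero_le_one 2).mul cos_two_phi (by positivity) (by positivity))
    (abs_nonneg _) le_rfl
  norm_num at h
  exact h

theorem geometricDerivBound_monomial (i k : ℕ) :
    GeometricDerivBound (scaleFactor ^ (2 * i + k)) (4 * i + k)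
      (Function.uncurry (monomial i k)) := by
  have hs := scaleFactor_pos.le
  have h := (geometricDerivBound_sectoral.pow (sq_nonneg _) (by norm_num) i).mul
    (geometricDerivBound_axial.pow hs zero_le_one k) (by positivity) (by positivity)
  rwa [← pow_mul, ← pow_add, mul_comm (i : ℝ), mul_one] at h

theorem uniformlySmooth_monomial :
    UniformlySmooth fun p : OddExponent => Function.uncurry (monomial p.1.1 p.1.2) where
  contDiff p := (geometricDerivBound_monomial p.1.1 p.1.2).contDiff
  exists_bound j := by
    have scaleFactor_lt_one : scaleFactor < 1 := by norm_num [scaleFactor]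
    obtain ⟨C, hC⟩ := (tendsto_pow_const_mul_const_pow_of_lt_one j scaleFactor_pos.le
      scaleFactor_lt_one).bddAbove_range
    refine ⟨2 ^ j * C, fun p x =>
      ((geometricDerivBound_monomial p.1.1 p.1.2).norm_iteratedFDeriv_le j x).trans ?_⟩
    set n := 2 * p.1.1 + p.1.2
    have frequency_le : (4 * p.1.1 + p.1.2 : ℝ) ≤ 2 * n := by
      exact_mod_cast (by omega : 4 * p.1.1 + p.1.2 ≤ 2 * n)
    calc scaleFactor ^ n * (4 * p.1.1 + p.1.2 : ℝ) ^ j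
        ≤ scaleFactor ^ n * (2 * n) ^ j := by
          have := scaleFactor_pos
          gcongr
      _ = 2 ^ j * (n ^ j * scaleFactor ^ n) := by ring
      _ ≤ 2 ^ j * C := by
          gcongr
          exact hC ⟨n, rfl⟩

theorem smooth_axial : SphSmooth axial := geometricDerivBound_axial.contDiff

theorem smooth_sectoral : SphSmooth sectoral := geometricDerivBound_sectoral.contDiff

section Laplacian

variable {θ φ : ℝ}

theorem dTheta_axial : dTheta axial θ φ = -scaleFactor * Real.sin θ := by
  simp [dTheta, axial]

theorem dPhi_axial : dPhi axial θ φ = 0 := by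
  simp [dPhi, axial]

theorem dTheta_sectoral :
    dTheta sectoral θ φ = scaleFactor ^ 2 * (2 * Real.sin θ * Real.cos θ * Real.cos (2 * φ)) := by
  simp [dTheta, sectoral]

theorem dPhi_sectoral :
    dPhi sectoral θ φ = scaleFactor ^ 2 * (Real.sin θ ^ 2 * (-2 * Real.sin (2 * φ))) := by
  simp [dPhi, sectoral, deriv_comp_mul_left (2 : ℝ) Real.cos]

theorem gradInner_axial_axial :
    gradInner axial axial θ φ = scaleFactor ^ 2 - axial θ φ ^ 2 := by
  rw [gradInner, dTheta_axial, dPhi_axial, axial]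
  linear_combination scaleFactor ^ 2 * Real.sin_sq_add_cos_sq θ

theorem gradInner_sectoral_axial :
    gradInner sectoral axial θ φ = -2 * (sectoral θ φ * axial θ φ) := by
  rw [gradInner, dTheta_axial, dPhi_axial, dTheta_sectoral, sectoral, axial]
  ring

theorem gradInner_sectoral_sectoral (hθ : Real.sin θ ≠ 0) :
    gradInner sectoral sectoral θ φ =
      4 * scaleFactor ^ 4 - 4 * scaleFactor ^ 2 * axial θ φ ^ 2 - 4 * sectoral θ φ ^ 2 := by
  have dPhi_sq_div : dPhi sectoral θ φ * dPhi sectoral θ φ / Real.sin θ ^ 2 =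
      4 * scaleFactor ^ 4 * (Real.sin θ ^ 2 * Real.sin (2 * φ) ^ 2) :=
    (div_eq_iff (pow_ne_zero 2 hθ)).2 (by rw [dPhi_sectoral]; ring)
  rw [gradInner, dPhi_sq_div, dTheta_sectoral, sectoral, axial]
  linear_combination 4 * scaleFactor ^ 4 *
    ((Real.sin θ ^ 2 * Real.cos (2 * φ) ^ 2 + 1) * Real.sin_sq_add_cos_sq θ +
      Real.sin θ ^ 2 * Real.sin_sq_add_cos_sq (2 * φ))

theorem lapS_axial (hθ : Real.sin θ ≠ 0) : lapS axial θ φ = -2 * axial θ φ := by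
  have hφφ : dPhi (dPhi axial) θ φ = 0 := by simp [dPhi, axial]
  have hθθ : dTheta (dTheta axial) θ φ = -scaleFactor * Real.cos θ := by
    have : (fun t => dTheta axial t φ) = fun t => -scaleFactor * Real.sin t :=
      funext fun t => dTheta_axial
    rw [dTheta, this]
    simp
  rw [smooth_axial.lapS_eq hθ, hθθ, hφφ, dTheta_axial, axial]
  field_simp
  ring

theorem lapS_sectoral (hθ : Real.sin θ ≠ 0) : lapS sectoral θ φ = -6 * sectoral θ φ := by
  have hθθ : HasDerivAt (fun t => dTheta sectoral t φ) (scaleFactor ^ 2 *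
      (2 * (Real.cos θ ^ 2 - Real.sin θ ^ 2) * Real.cos (2 * φ))) θ := by
    simp only [dTheta_sectoral]
    refine (((((Real.hasDerivAt_sin θ).const_mul 2).fun_mul (Real.hasDerivAt_cos θ)).mul_const
      (Real.cos (2 * φ))).const_mul (scaleFactor ^ 2)).congr_deriv ?_
    ring
  have hφφ : dPhi (dPhi sectoral) θ φ =
      scaleFactor ^ 2 * (Real.sin θ ^ 2 * (-4 * Real.cos (2 * φ))) := by
    have : dPhi sectoral θ = fun p =>
        scaleFactor ^ 2 * (Real.sin θ ^ 2 * (-2 * Real.sin (2 * p))) :=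
      funext fun p => dPhi_sectoral
    rw [dPhi, this]
    simp only [deriv_const_mul_field', deriv_comp_mul_left (2 : ℝ) Real.sin, Real.deriv_sin,
      smul_eq_mul]
    ring
  rw [smooth_sectoral.lapS_eq hθ, dTheta, hθθ.deriv, hφφ, dTheta_sectoral, sectoral]
  field_simp
  linear_combination 4 * scaleFactor ^ 2 * Real.cos (2 * φ) * Real.sin_sq_add_cos_sq θ

theorem lapS_monomial (i k : ℕ) (hθ : Real.sin θ ≠ 0) :
    lapS (monomial i k) θ φ =
      -((2 * i + k) * (2 * i + k + 1)) * monomial i k θ φ +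
        i * (i - 1) * (4 * scaleFactor ^ 4 * monomial (i - 2) k θ φ -
          4 * scaleFactor ^ 2 * monomial (i - 2) (k + 2) θ φ) +
        k * (k - 1) * scaleFactor ^ 2 * monomial i (k - 2) θ φ := by
  have expansion := (smooth_sectoral.pow i).lapS_mul (smooth_axial.pow k) hθ (φ := φ)
  rw [gradInner_pow_pow smooth_sectoral smooth_axial, smooth_sectoral.lapS_pow hθ,
    smooth_axial.lapS_pow hθ, lapS_sectoral hθ, lapS_axial hθ, gradInner_sectoral_axial,
    gradInner_sectoral_sectoral hθ, gradInner_axial_axial] at expansion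
  have mul_pow_pred (n : ℕ) (x : ℝ) : n * x ^ (n - 1) * x = n * x ^ n := by
    cases n <;> simp [pow_succ, mul_assoc]
  have mul_pow_pred_pred (n : ℕ) (x : ℝ) :
      n * (n - 1) * x ^ (n - 2) * x ^ 2 = n * (n - 1) * x ^ n := by
    rcases n with _ | _ | n
    · simp
    · simp
    · rw [mul_assoc, ← pow_add, Nat.sub_add_cancel (by omega)]
  refine expansion.trans ?_
  simp only [monomial]
  generalize sectoral θ φ = Q, axial θ φ = Z
  linear_combination (-6 * Z ^ k - 4 * (k * Z ^ (k - 1) * Z)) * mul_pow_pred i Q -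
    4 * Z ^ k * mul_pow_pred_pred i Q - (2 * Q ^ i + 4 * i * Q ^ i) * mul_pow_pred k Z -
    Q ^ i * mul_pow_pred_pred k Z

end Laplacian
end Monomials

section ShiftedLaplacian

/-- The basis vector of `ℓ¹` representing `Qⁱ Zᵏ`, or `0` if `i + k` is even. -/
def monomialVec (i k : ℕ) : Ell1 OddExponent :=
  if h : Odd (i + k) then basisVec ⟨(i, k), h⟩ else 0

theorem monomialVec_of_odd {i k : ℕ} (h : Odd (i + k)) : monomialVec i k = basisVec ⟨(i, k), h⟩ :=
  dif_pos h

theorem norm_smul_monomialVec_le {c : ℝ} (hc : 0 ≤ c) (i k : ℕ) : ‖c • monomialVec i k‖ ≤ c := by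
  rw [norm_smul, Real.norm_of_nonneg hc]
  refine mul_le_of_le_one_right hc ?_
  unfold monomialVec
  split_ifs
  · exact (norm_basisVec _).le
  · simp

/-- The function on the sphere represented by an element of `ℓ¹`. -/
def toSphereFun (f : Ell1 OddExponent) : SphereFun :=
  fun θ φ => uniformlySmooth_monomial.eval (θ, φ) f

theorem toSphereFun_monomialVec {i k : ℕ} (h : Odd (i + k)) :
    toSphereFun (monomialVec i k) = monomial i k := by
  rw [monomialVec_of_odd h]
  exact funext₂ fun θ φ => uniformlySmooth_monomial.eval_basisVec (θ, φ) _

/-- The spherical degree `2 i + k` of `Qⁱ Zᵏ`. -/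
def degree (p : OddExponent) : ℕ := 2 * p.1.1 + p.1.2

/-- The exponent of `Q`. -/
def sectoralExponent : OddExponent := ⟨(1, 0), by decide⟩

/-- The coefficient of `Q`, as a functional. -/
def sectoralCoord : Ell1 OddExponent →L[ℝ] ℝ :=
  ell1Lift (fun p => if p = sectoralExponent then 1 else 0) 1 fun p => by split_ifs <;> simp

/-- The diagonal coefficients of `Δ + 6 + sectoralCoord • Q` in the monomial basis. -/
def diagCoeff (p : OddExponent) : ℝ :=
  if p = sectoralExponent then 1 else 6 - degree p * (degree p + 1)

/-- The terms of lower degree in the expansion of `Δ (Qⁱ Zᵏ)`. -/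
def lowerOrder (p : OddExponent) : Ell1 OddExponent :=
  (4 * (p.1.1 * (p.1.1 - 1)) * scaleFactor ^ 4) • monomialVec (p.1.1 - 2) p.1.2 -
    (4 * (p.1.1 * (p.1.1 - 1)) * scaleFactor ^ 2) • monomialVec (p.1.1 - 2) (p.1.2 + 2) +
    (p.1.2 * (p.1.2 - 1) * scaleFactor ^ 2) • monomialVec p.1.1 (p.1.2 - 2)

theorem degree_eq_one_or_three_le {p : OddExponent} (hp : p ≠ sectoralExponent) :
    degree p = 1 ∨ 3 ≤ degree p := by
  obtain ⟨⟨i, k⟩, h⟩ := p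
  simp only [sectoralExponent, ne_eq, Subtype.mk.injEq, Prod.mk.injEq, degree] at *
  have := Nat.odd_iff.1 h
  omega

theorem one_le_abs_diagCoeff (p : OddExponent) : 1 ≤ |diagCoeff p| := by
  unfold diagCoeff
  split_ifs with hp
  · simp
  · rcases degree_eq_one_or_three_le hp with h | h
    · norm_num [h]
    · have : (3 : ℝ) ≤ degree p := by exact_mod_cast h
      rw [le_abs]
      right
      nlinarith

theorem norm_lowerOrder_le_degree_sq (p : OddExponent) :
    ‖lowerOrder p‖ ≤ 5 * scaleFactor ^ 2 * degree p ^ 2 := by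
  obtain ⟨⟨i, k⟩, hp⟩ := p
  have mul_pred_nonneg (n : ℕ) : (0 : ℝ) ≤ n * (n - 1) := by
    rcases n with _ | n
    · simp
    · push_cast; rw [add_sub_cancel_right]; positivity
  have hi := mul_pred_nonneg i
  have hk := mul_pred_nonneg k
  calc ‖lowerOrder ⟨(i, k), hp⟩‖
      ≤ 4 * (i * (i - 1)) * scaleFactor ^ 4 + 4 * (i * (i - 1)) * scaleFactor ^ 2 +
          k * (k - 1) * scaleFactor ^ 2 :=
        (norm_add_le _ _).trans (add_le_add ((norm_sub_le _ _).trans (add_le_add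
          (norm_smul_monomialVec_le (by positivity) _ _)
          (norm_smul_monomialVec_le (by positivity) _ _)))
          (norm_smul_monomialVec_le (by positivity) _ _))
    _ ≤ 5 * scaleFactor ^ 2 * degree ⟨(i, k), hp⟩ ^ 2 := by
        simp only [degree, Nat.cast_add, Nat.cast_mul, Nat.cast_ofNat]
        norm_num [scaleFactor]
        have hi₀ := i.cast_nonneg (α := ℝ)
        have hk₀ := k.cast_nonneg (α := ℝ)
        nlinarith [mul_nonneg hi₀ hk₀]

theorem lowerOrder_eq_zero {p : OddExponent} (hi : p.1.1 ≤ 1) (hk : p.1.2 ≤ 1) :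
    lowerOrder p = 0 := by
  obtain ⟨⟨i, k⟩, h⟩ := p
  simp only at hi hk
  interval_cases i <;> interval_cases k <;> simp [lowerOrder]

theorem norm_lowerOrder_le (p : OddExponent) : ‖lowerOrder p‖ ≤ 1 / 2 * |diagCoeff p| := by
  rcases eq_or_ne p sectoralExponent with rfl | hp
  · rw [lowerOrder_eq_zero le_rfl zero_le_one, norm_zero]
    positivity
  refine (norm_lowerOrder_le_degree_sq p).trans ?_
  rw [diagCoeff, if_neg hp, abs_sub_comm]
  rcases degree_eq_one_or_three_le hp with h | h
  · norm_num [h, scaleFactor]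
  · have : (3 : ℝ) ≤ degree p := by exact_mod_cast h
    rw [abs_of_nonneg (by nlinarith)]
    norm_num [scaleFactor]
    nlinarith

theorem toSphereFun_lowerOrder (p : OddExponent) (θ φ : ℝ) :
    toSphereFun (lowerOrder p) θ φ =
      p.1.1 * (p.1.1 - 1) * (4 * scaleFactor ^ 4 * monomial (p.1.1 - 2) p.1.2 θ φ -
          4 * scaleFactor ^ 2 * monomial (p.1.1 - 2) (p.1.2 + 2) θ φ) +
        p.1.2 * (p.1.2 - 1) * scaleFactor ^ 2 * monomial p.1.1 (p.1.2 - 2) θ φ := by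
  obtain ⟨⟨i, k⟩, h⟩ := p
  have eval_monomialVec (i k : ℕ) (h : Odd (i + k)) :
      uniformlySmooth_monomial.eval (θ, φ) (monomialVec i k) = monomial i k θ φ :=
    congrFun₂ (toSphereFun_monomialVec h) θ φ
  have eval_lower_i (c : ℝ) (k : ℕ) (h : Odd (i + k)) :
      i * (i - 1) * c * uniformlySmooth_monomial.eval (θ, φ) (monomialVec (i - 2) k) =
        i * (i - 1) * c * monomial (i - 2) k θ φ := by
    rcases i with _ | _ | i
    · simp
    · simp
    · rw [eval_monomialVec _ _ (by rw [Nat.odd_iff] at *; omega)]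
  have eval_lower_k :
      k * (k - 1) * uniformlySmooth_monomial.eval (θ, φ) (monomialVec i (k - 2)) =
        k * (k - 1) * monomial i (k - 2) θ φ := by
    rcases k with _ | _ | k
    · simp
    · simp
    · rw [eval_monomialVec _ _ (by rw [Nat.odd_iff] at *; omega)]
  simp only [toSphereFun, lowerOrder, map_add, map_sub, map_smul, smul_eq_mul]
  linear_combination eval_lower_i (4 * scaleFactor ^ 4) k h -
    eval_lower_i (4 * scaleFactor ^ 2) (k + 2) (by rw [Nat.odd_iff] at *; omega) +
    scaleFactor ^ 2 * eval_lower_k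

theorem sectoralCoord_basisVec (p : OddExponent) :
    sectoralCoord (basisVec p) = if p = sectoralExponent then 1 else 0 :=
  ell1Lift_basisVec _ _ _ p

theorem lapS_toSphereFun (f : Ell1 OddExponent) {θ : ℝ} (hθ : Real.sin θ ≠ 0) (φ : ℝ) :
    lapS (toSphereFun f) θ φ = uniformlySmooth_monomial.lapEval θ φ f :=
  uniformlySmooth_monomial.lapS_eval f hθ φ

theorem exists_shiftedLaplacian_inverse : ∃ K : Ell1 OddExponent →L[ℝ] Ell1 OddExponent,
    (∀ p, K (diagCoeff p • basisVec p + lowerOrder p) = basisVec p) ∧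
    ∀ f θ φ, Real.sin θ ≠ 0 → lapS (toSphereFun (K f)) θ φ + 6 * toSphereFun (K f) θ φ +
      sectoralCoord (K f) * sectoral θ φ = toSphereFun f θ φ := by
  have : Nonempty OddExponent := ⟨sectoralExponent⟩
  obtain ⟨K, K_basis, K_functional⟩ := exists_inverse_of_diagonallyDominant one_half_lt_one
    one_le_abs_diagCoeff norm_lowerOrder_le
  refine ⟨K, K_basis, fun f θ φ hθ => ?_⟩
  have h := K_functional (uniformlySmooth_monomial.lapEval θ φ +
    (6 : ℝ) • uniformlySmooth_monomial.eval (θ, φ) + sectoral θ φ • sectoralCoord)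
    (uniformlySmooth_monomial.eval (θ, φ)) (fun p => ?_) f
  · rw [lapS_toSphereFun _ hθ, mul_comm (sectoralCoord _)]
    exact h
  · have lower := toSphereFun_lowerOrder p θ φ
    have lap : uniformlySmooth_monomial.lapEval θ φ (basisVec p) = _ :=
      (uniformlySmooth_monomial.lapEval_basisVec p hθ φ).trans (lapS_monomial p.1.1 p.1.2 hθ)
    have value : uniformlySmooth_monomial.eval (θ, φ) (basisVec p) = monomial p.1.1 p.1.2 θ φ :=
      uniformlySmooth_monomial.eval_basisVec (θ, φ) p
    simp only [add_apply, smul_apply, map_add, map_smul, smul_eq_mul, sectoralCoord_basisVec]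
    rw [lap, value, show uniformlySmooth_monomial.eval (θ, φ) (lowerOrder p) = _ from lower,
      diagCoeff, degree]
    push_cast
    split_ifs with hp
    · subst hp
      norm_num [sectoralExponent, monomial]
    · ring

end ShiftedLaplacian

section Rodrigues

open Polynomial

/-- The `j`-th derivative of `(X² - 1)ⁿ`. By Rodrigues' formula, `rodrigues n (n + m)` is `2ⁿ n!`
times the `m`-th derivative of the Legendre polynomial `P_n`. -/
def rodrigues (n j : ℕ) : ℝ[X] := derivative^[j] ((X ^ 2 - 1) ^ n)

theorem iterate_derivative_rodrigues (n j m : ℕ) :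
    derivative^[m] (rodrigues n j) = rodrigues n (j + m) := by
  rw [rodrigues, ← Function.iterate_add_apply, add_comm, rodrigues]

theorem natDegree_X_sq_sub_one_pow (n : ℕ) : ((X ^ 2 - 1 : ℝ[X]) ^ n).natDegree = 2 * n := by
  rw [natDegree_pow, ← C_1, natDegree_X_pow_sub_C, mul_comm]

theorem rodrigues_eq_zero {n j : ℕ} (h : 2 * n < j) : rodrigues n j = 0 :=
  iterate_derivative_eq_zero ((natDegree_X_sq_sub_one_pow n).trans_lt h)

theorem natDegree_rodrigues_le (n j : ℕ) : (rodrigues n j).natDegree ≤ 2 * n - j :=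
  (natDegree_iterate_derivative _ _).trans_eq (by rw [natDegree_X_sq_sub_one_pow])

theorem iteratedDeriv_polynomial_eval (P : ℝ[X]) (j : ℕ) :
    iteratedDeriv j (fun x => P.eval x) = fun x => (derivative^[j] P).eval x := by
  induction j generalizing P with
  | zero => simp
  | succ j ih =>
    rw [iteratedDeriv_succ', funext fun x => P.deriv (x := x), ih, Function.iterate_succ_apply]

theorem legP_eq_rodrigues (n : ℕ) :
    legP n = fun s => (C (1 / (2 ^ n * (n.factorial : ℝ))) * rodrigues n n).eval s := by
  ext s
  have h : (fun x : ℝ => (x ^ 2 - 1) ^ n) = fun x => ((X ^ 2 - 1) ^ n : ℝ[X]).eval x := by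
    ext x; simp
  rw [legP, h, iteratedDeriv_polynomial_eval, rodrigues, eval_mul, eval_C]

theorem assocLegP_cos (n m : ℕ) (θ : ℝ) :
    assocLegP n m (Real.cos θ) = (-1) ^ m * |Real.sin θ| ^ m *
      (1 / (2 ^ n * (n.factorial : ℝ)) * (rodrigues n (n + m)).eval (Real.cos θ)) := by
  have h : (1 - Real.cos θ ^ 2) ^ ((m : ℝ) / 2) = |Real.sin θ| ^ m := by
    rw [← Real.sin_sq, ← sq_abs, ← Real.rpow_natCast, ← Real.rpow_natCast,
      ← Real.rpow_mul (abs_nonneg _)]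
    congr 1
    push_cast
    ring
  rw [assocLegP, legP_eq_rodrigues, iteratedDeriv_polynomial_eval, iterate_derivative_C_mul,
    iterate_derivative_rodrigues, h]
  simp only [eval_mul, eval_C]

theorem abs_eval_rodrigues_le (n j : ℕ) {s : ℝ} (hs : |s| ≤ 1) :
    |(rodrigues n j).eval s| ≤ 2 ^ n * (2 * n).descFactorial j := by
  have expand : ((X ^ 2 - 1) ^ n : ℝ[X]) =
      ∑ i ∈ Finset.range (n + 1), C ((-1) ^ (n - i) * (n.choose i : ℝ)) * X ^ (2 * i) := by
    rw [sub_eq_add_neg, add_pow]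
    refine Finset.sum_congr rfl fun i _ => ?_
    simp only [← pow_mul, map_mul, map_pow, map_neg, map_one, map_natCast]
    ring
  have sum_choose : (2 : ℝ) ^ n = ∑ i ∈ Finset.range (n + 1), (n.choose i : ℝ) := by
    exact_mod_cast (Nat.sum_range_choose n).symm
  rw [rodrigues, expand, iterate_derivative_sum, eval_finsetSum, sum_choose, Finset.sum_mul]
  refine (Finset.abs_sum_le_sum_abs _ _).trans (Finset.sum_le_sum fun i hi => ?_)
  simp only [iterate_derivative_C_mul, iterate_derivative_X_pow_eq_C_mul, eval_mul, eval_C,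
    eval_pow, eval_X, abs_mul, abs_pow, abs_neg, abs_one, one_pow, one_mul, Nat.abs_cast]
  have coeff_le : ((2 * i).descFactorial j : ℝ) ≤ (2 * n).descFactorial j := by
    exact_mod_cast Nat.descFactorial_le _ (by have := Finset.mem_range.1 hi; omega)
  gcongr
  exact (mul_le_of_le_one_right (Nat.cast_nonneg _) (pow_le_one₀ (abs_nonneg _) hs)).trans coeff_le

theorem eval_iterate_derivative_eq_zero_of_dvd {P : ℝ[X]} {r j : ℕ} (hP : (X ^ 2 - 1) ^ r ∣ P)
    (hj : j < r) {x : ℝ} (hx : x ^ 2 = 1) : (derivative^[j] P).eval x = 0 := by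
  obtain ⟨c, hc⟩ := pow_sub_dvd_iterate_derivative_of_pow_dvd j hP
  simp [hc, hx, (Nat.sub_pos_of_lt hj).ne']

theorem integral_eval_mul_derivative (P W : ℝ[X])
    (h : ∀ x : ℝ, x ^ 2 = 1 → P.eval x * W.eval x = 0) :
    ∫ s in (-1 : ℝ)..1, P.eval s * (derivative W).eval s =
      -∫ s in (-1 : ℝ)..1, (derivative P).eval s * W.eval s := by
  rw [intervalIntegral.integral_mul_deriv_eq_deriv_mul (fun x _ => P.hasDerivAt x)
    (fun x _ => W.hasDerivAt x) ((derivative P).continuous.intervalIntegrable _ _)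
    ((derivative W).continuous.intervalIntegrable _ _), h 1 (by norm_num), h (-1) (by norm_num)]
  ring

theorem integral_eval_mul_rodrigues {P : ℝ[X]} (n : ℕ) {m : ℕ} (hP : (X ^ 2 - 1) ^ m ∣ P) :
    ∫ s in (-1 : ℝ)..1, P.eval s * (rodrigues n (n + m)).eval s =
      (-1) ^ (n + m) * ∫ s in (-1 : ℝ)..1, (derivative^[n + m] P).eval s * (s ^ 2 - 1) ^ n := by
  have by_parts (j : ℕ) (hj : j ≤ n + m) :
      ∫ s in (-1 : ℝ)..1, P.eval s * (rodrigues n (n + m)).eval s =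
        (-1) ^ j * ∫ s in (-1 : ℝ)..1,
          (derivative^[j] P).eval s * (rodrigues n (n + m - j)).eval s := by
    induction j with
    | zero => simp
    | succ j ih =>
      have lower : rodrigues n (n + m - j) = derivative (rodrigues n (n + m - (j + 1))) := by
        rw [← Function.iterate_one derivative, iterate_derivative_rodrigues]
        congr 1
        omega
      -- The boundary terms vanish through the factor `(X² - 1)ᵐ` of `P` at first, and through
      -- `(X² - 1)ⁿ` from then on.
      have boundary (x : ℝ) (hx : x ^ 2 = 1) :
          (derivative^[j] P).eval x * (rodrigues n (n + m - (j + 1))).eval x = 0 := by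
        rcases lt_or_ge j m with hm | hm
        · rw [eval_iterate_derivative_eq_zero_of_dvd hP hm hx, zero_mul]
        · rw [rodrigues, eval_iterate_derivative_eq_zero_of_dvd dvd_rfl (by omega) hx, mul_zero]
      rw [ih (by omega), lower, integral_eval_mul_derivative _ _ boundary,
        Function.iterate_succ_apply']
      ring
  rw [by_parts (n + m) le_rfl, Nat.sub_self]
  simp [rodrigues]

theorem integral_eval_mul_rodrigues_eq_zero {P : ℝ[X]} {n m : ℕ} (hP : (X ^ 2 - 1) ^ m ∣ P)
    (hd : P.natDegree < n + m) :
    ∫ s in (-1 : ℝ)..1, P.eval s * (rodrigues n (n + m)).eval s = 0 := by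
  rw [integral_eval_mul_rodrigues n hP, iterate_derivative_eq_zero hd]
  simp

theorem integral_sq_sub_one_pow_ne_zero (n : ℕ) : ∫ s in (-1 : ℝ)..1, (s ^ 2 - 1) ^ n ≠ 0 := by
  have pos : 0 < ∫ s in (-1 : ℝ)..1, (1 - s ^ 2) ^ n :=
    intervalIntegral.intervalIntegral_pos_of_pos_on
      (Continuous.intervalIntegrable (by fun_prop) _ _)
      (fun s hs => pow_pos (by nlinarith [hs.1, hs.2]) n) (by norm_num)
  have flip (s : ℝ) : (s ^ 2 - 1) ^ n = (-1) ^ n * (1 - s ^ 2) ^ n := by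
    rw [← mul_pow]
    congr 1
    ring
  simp only [flip, intervalIntegral.integral_const_mul]
  exact mul_ne_zero (pow_ne_zero _ (by norm_num)) pos.ne'

theorem integral_eval_mul_rodrigues_ne_zero {P : ℝ[X]} {n m : ℕ} (hP : (X ^ 2 - 1) ^ m ∣ P)
    (hP₀ : P ≠ 0) (hd : P.natDegree = n + m) :
    ∫ s in (-1 : ℝ)..1, P.eval s * (rodrigues n (n + m)).eval s ≠ 0 := by
  have top : derivative^[n + m] P = C ((n + m).factorial * P.leadingCoeff) := by
    rw [eq_C_of_natDegree_le_zero ((natDegree_iterate_derivative P (n + m)).trans (by omega)),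
      coeff_iterate_derivative, zero_add, Nat.descFactorial_self, nsmul_eq_mul, ← hd,
      coeff_natDegree]
  rw [integral_eval_mul_rodrigues n hP, top]
  simp only [eval_C, intervalIntegral.integral_const_mul]
  exact mul_ne_zero (pow_ne_zero _ (by norm_num)) (mul_ne_zero (mul_ne_zero
    (Nat.cast_ne_zero.2 (Nat.factorial_ne_zero _)) (leadingCoeff_ne_zero.2 hP₀))
    (integral_sq_sub_one_pow_ne_zero n))

end Rodrigues

section SphericalHarmonics

/-- The longitudinal factor of `Y_n^m`: `cos (|m| φ)` for `0 ≤ m` and `sin (|m| φ)` for `m < 0`,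
written as a single phase-shifted cosine. -/
def azimuthal (m : ℤ) (φ : ℝ) : ℝ :=
  Real.cos (m.natAbs * φ - if 0 ≤ m then 0 else Real.pi / 2)

/-- The colatitudinal factor of `Y_n^m`, up to normalization. -/
def polar (n : ℕ) (m : ℤ) (θ : ℝ) : ℝ :=
  |Real.sin θ| ^ m.natAbs * (rodrigues n (n + m.natAbs)).eval (Real.cos θ)

/-- The constant normalizing `polar n m θ * azimuthal m φ` in `L²(S²)`. -/
def harmonicNorm (n : ℕ) (m : ℤ) : ℝ :=
  (if m = 0 then 1 else √2) * √((2 * n + 1) / (4 * Real.pi) *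
    ((n - m.natAbs).factorial / (n + m.natAbs).factorial)) / (2 ^ n * n.factorial)

theorem ynm_eq (n : ℕ) (m : ℤ) (θ φ : ℝ) :
    Ynm n m θ φ = harmonicNorm n m * polar n m θ * azimuthal m φ := by
  have sign_sq : (-1 : ℝ) ^ m.natAbs * (-1) ^ m.natAbs = 1 := by
    rw [← mul_pow]
    simp
  unfold Ynm harmonicNorm polar azimuthal
  rcases lt_trichotomy m 0 with hm | rfl | hm
  · rw [if_neg hm.ne, if_neg hm.not_gt, if_neg hm.ne, if_neg hm.not_ge, assocLegP_cos,
      Real.cos_sub_pi_div_two]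
    linear_combination (√2 * √((2 * n + 1) / (4 * Real.pi) *
      ((n - m.natAbs).factorial / (n + m.natAbs).factorial)) / (2 ^ n * n.factorial) *
      (|Real.sin θ| ^ m.natAbs * (rodrigues n (n + m.natAbs)).eval (Real.cos θ)) *
      Real.sin (m.natAbs * φ)) * sign_sq
  · simp [legP_eq_rodrigues, Nat.factorial_ne_zero]
    ring
  · rw [if_neg hm.ne', if_pos hm, if_neg hm.ne', if_pos hm.le, assocLegP_cos, sub_zero]
    linear_combination (√2 * √((2 * n + 1) / (4 * Real.pi) *
      ((n - m.natAbs).factorial / (n + m.natAbs).factorial)) / (2 ^ n * n.factorial) *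
      (|Real.sin θ| ^ m.natAbs * (rodrigues n (n + m.natAbs)).eval (Real.cos θ)) *
      Real.cos (m.natAbs * φ)) * sign_sq

theorem harmonicNorm_pos (n : ℕ) (m : ℤ) : 0 < harmonicNorm n m := by
  have := Real.pi_pos
  unfold harmonicNorm
  split_ifs <;> positivity

theorem continuous_azimuthal (m : ℤ) : Continuous (azimuthal m) := by
  unfold azimuthal
  fun_prop

theorem continuous_polar (n : ℕ) (m : ℤ) : Continuous (polar n m) := by
  unfold polar
  fun_prop

theorem continuous_ynm (n : ℕ) (m : ℤ) : Continuous (Function.uncurry (Ynm n m)) := by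
  have := continuous_azimuthal m
  have := continuous_polar n m
  simp only [Function.uncurry_def, ynm_eq]
  fun_prop

theorem abs_polar_le (n : ℕ) (m : ℤ) (θ : ℝ) :
    |polar n m θ| ≤ 2 ^ n * (2 * n).descFactorial (n + m.natAbs) := by
  rw [polar, abs_mul, abs_pow, abs_abs]
  exact (mul_le_of_le_one_left (abs_nonneg _) (pow_le_one₀ (abs_nonneg _)
    (Real.abs_sin_le_one θ))).trans (abs_eval_rodrigues_le _ _ (Real.abs_cos_le_one θ))

theorem harmonicNorm_sq_le (n : ℕ) (m : ℤ) : harmonicNorm n m ^ 2 ≤ (2 * n + 1) *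
    ((n - m.natAbs).factorial / (n + m.natAbs).factorial) / (2 ^ n * n.factorial) ^ 2 := by
  have hpi := Real.pi_gt_three
  have factor_le : ((if m = 0 then 1 else √2) ^ 2 : ℝ) ≤ 2 := by
    split_ifs <;> norm_num
  rw [harmonicNorm, div_pow, mul_pow, Real.sq_sqrt (by positivity)]
  refine div_le_div_of_nonneg_right ?_ (by positivity)
  calc (if m = 0 then 1 else √2) ^ 2 * ((2 * n + 1) / (4 * Real.pi) *
        ((n - m.natAbs).factorial / (n + m.natAbs).factorial) : ℝ)
      ≤ 2 * ((2 * n + 1) / (4 * (1 / 2)) *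
        ((n - m.natAbs).factorial / (n + m.natAbs).factorial)) := by
        gcongr
        linarith
    _ = (2 * n + 1) * ((n - m.natAbs).factorial / (n + m.natAbs).factorial) := by ring

theorem harmonicNorm_sq_mul_descFactorial_sq_le (n : ℕ) (m : ℤ) :
    harmonicNorm n m ^ 2 * (2 ^ n * (2 * n).descFactorial (n + m.natAbs)) ^ 2 ≤ 48 ^ n := by
  rcases lt_or_ge n m.natAbs with hm | hm
  · rw [Nat.descFactorial_of_lt (by omega)]
    simp
  have choose_eq : ((2 * n).choose n : ℝ) = (2 * n).factorial / (n.factorial * n.factorial) := by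
    rw [Nat.cast_choose ℝ (by omega), two_mul, Nat.add_sub_cancel]
  have choose_add_eq : ((2 * n).choose (n + m.natAbs) : ℝ) =
      (2 * n).factorial / ((n + m.natAbs).factorial * (n - m.natAbs).factorial) := by
    rw [Nat.cast_choose ℝ (by omega), show 2 * n - (n + m.natAbs) = n - m.natAbs by omega]
  have descFactorial_eq : ((2 * n).descFactorial (n + m.natAbs) : ℝ) =
      (2 * n).factorial / (n - m.natAbs).factorial := by
    rw [Nat.descFactorial_eq_div (by omega), show 2 * n - (n + m.natAbs) = n - m.natAbs by omega,
      Nat.cast_div (Nat.factorial_dvd_factorial (by omega)) (by positivity)]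
  have choose_le (k : ℕ) : ((2 * n).choose k : ℝ) ≤ 2 ^ (2 * n) := by
    exact_mod_cast Nat.choose_le_two_pow (2 * n) k
  have bernoulli : (2 * n + 1 : ℝ) ≤ 3 ^ n := by
    have := one_add_mul_le_pow (by norm_num : (-2 : ℝ) ≤ 2) n
    norm_num at this
    linarith
  calc harmonicNorm n m ^ 2 * (2 ^ n * (2 * n).descFactorial (n + m.natAbs)) ^ 2
      ≤ (2 * n + 1) * ((n - m.natAbs).factorial / (n + m.natAbs).factorial) /
          (2 ^ n * n.factorial) ^ 2 * (2 ^ n * (2 * n).descFactorial (n + m.natAbs)) ^ 2 := by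
        gcongr
        exact harmonicNorm_sq_le n m
    _ = (2 * n + 1) * (((2 * n).choose n : ℝ) * (2 * n).choose (n + m.natAbs)) := by
        rw [choose_eq, choose_add_eq, descFactorial_eq]
        field_simp
    _ ≤ 3 ^ n * (2 ^ (2 * n) * 2 ^ (2 * n)) := by
        gcongr <;> exact choose_le _
    _ = 48 ^ n := by
        rw [← mul_pow, pow_mul, ← mul_pow]
        norm_num

theorem abs_ynm_le (n : ℕ) (m : ℤ) (θ φ : ℝ) : |Ynm n m θ φ| ≤ 7 ^ n := by
  refine abs_le_of_sq_le_sq ?_ (by positivity)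
  calc Ynm n m θ φ ^ 2
      = harmonicNorm n m ^ 2 * |polar n m θ| ^ 2 * azimuthal m φ ^ 2 := by
        rw [ynm_eq, sq_abs]
        ring
    _ ≤ harmonicNorm n m ^ 2 * (2 ^ n * (2 * n).descFactorial (n + m.natAbs)) ^ 2 * 1 := by
        gcongr
        · exact abs_polar_le n m θ
        · exact Real.cos_sq_le_one _
    _ ≤ 49 ^ n := by
        rw [mul_one]
        exact (harmonicNorm_sq_mul_descFactorial_sq_le n m).trans (by gcongr; norm_num)
    _ = (7 ^ n) ^ 2 := by
        rw [← pow_mul, mul_comm, pow_mul]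
        norm_num

theorem ynm_one_zero (θ φ : ℝ) : Ynm 1 0 θ φ = √(3 / (4 * Real.pi)) * Real.cos θ := by
  have h : legP 1 (Real.cos θ) = Real.cos θ := by
    simp [legP_eq_rodrigues, rodrigues, one_add_one_eq_two]
  rw [Ynm, if_pos rfl, h]
  norm_num

end SphericalHarmonics

section LongitudinalIntegrals

theorem integral_cos_int_mul_add {a : ℤ} (ha : a ≠ 0) (δ : ℝ) :
    ∫ φ in (0 : ℝ)..(2 * Real.pi), Real.cos (a * φ + δ) = 0 := by
  have ha' : (a : ℝ) ≠ 0 := Int.cast_ne_zero.2 ha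
  rw [intervalIntegral.integral_comp_mul_add _ ha', integral_cos, mul_zero, zero_add, add_comm,
    Real.sin_add_int_mul_two_pi, sub_self, smul_zero]

theorem integral_cos_two_mul_pow_succ_mul_cos (i : ℕ) (a : ℤ) (δ : ℝ) :
    ∫ φ in (0 : ℝ)..(2 * Real.pi), Real.cos (2 * φ) ^ (i + 1) * Real.cos (a * φ + δ) =
      ((∫ φ in (0 : ℝ)..(2 * Real.pi), Real.cos (2 * φ) ^ i * Real.cos ((a + 2 : ℤ) * φ + δ)) +
        ∫ φ in (0 : ℝ)..(2 * Real.pi), Real.cos (2 * φ) ^ i * Real.cos ((a - 2 : ℤ) * φ + δ)) /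
        2 := by
  rw [← intervalIntegral.integral_add (Continuous.intervalIntegrable (by fun_prop) _ _)
    (Continuous.intervalIntegrable (by fun_prop) _ _), ← intervalIntegral.integral_div]
  congr 1 with φ
  rw [show ((a + 2 : ℤ) * φ + δ : ℝ) = a * φ + δ + 2 * φ by push_cast; ring,
    show ((a - 2 : ℤ) * φ + δ : ℝ) = a * φ + δ - 2 * φ by push_cast; ring,
    Real.cos_add (a * φ + δ), Real.cos_sub (a * φ + δ)]
  ring

theorem integral_cos_two_mul_pow_mul_cos_eq_zero {i : ℕ} {a : ℤ} (h : Odd a ∨ 2 * (i : ℤ) < |a|)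
    (δ : ℝ) :
    ∫ φ in (0 : ℝ)..(2 * Real.pi), Real.cos (2 * φ) ^ i * Real.cos (a * φ + δ) = 0 := by
  induction i generalizing a with
  | zero =>
    have ha : a ≠ 0 := by
      rintro rfl
      simp at h
    simpa using integral_cos_int_mul_add ha δ
  | succ i ih =>
    rw [integral_cos_two_mul_pow_succ_mul_cos, ih, ih, add_zero, zero_div]
    · exact h.imp (·.sub_even even_two) fun h => by rw [lt_abs] at *; omega
    · exact h.imp (·.add_even even_two) fun h => by rw [lt_abs] at *; omega

theorem integral_cos_two_mul_pow_mul_sin (i : ℕ) (a : ℤ) :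
    ∫ φ in (0 : ℝ)..(2 * Real.pi), Real.cos (2 * φ) ^ i * Real.sin (a * φ) = 0 := by
  have reflect (φ : ℝ) :
      Real.cos (2 * (2 * Real.pi - φ)) ^ i * Real.sin (a * (2 * Real.pi - φ)) =
        -(Real.cos (2 * φ) ^ i * Real.sin (a * φ)) := by
    rw [mul_sub, mul_sub, Real.sin_int_mul_two_pi_sub, ← Real.cos_int_mul_two_pi_sub (2 * φ) 2]
    push_cast
    ring
  have h := intervalIntegral.integral_comp_sub_left (a := 0) (b := 2 * Real.pi)
    (fun φ => Real.cos (2 * φ) ^ i * Real.sin (a * φ)) (2 * Real.pi)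
  simp only [reflect, intervalIntegral.integral_neg, sub_self, sub_zero] at h
  linarith

theorem integral_cos_two_mul_pow_mul_cos_top (i : ℕ) :
    ∫ φ in (0 : ℝ)..(2 * Real.pi), Real.cos (2 * φ) ^ i * Real.cos ((2 * i : ℤ) * φ + 0) =
      2 * Real.pi / 2 ^ i := by
  induction i with
  | zero => simp
  | succ i ih =>
    rw [integral_cos_two_mul_pow_succ_mul_cos, integral_cos_two_mul_pow_mul_cos_eq_zero
      (Or.inr (by rw [lt_abs]; left; push_cast; omega)),
      show 2 * ((i + 1 : ℕ) : ℤ) - 2 = 2 * i by push_cast; ring, ih]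
    ring

theorem azimuthal_eq_cos_add (m : ℤ) :
    ∃ δ, ∀ φ, azimuthal m φ = Real.cos ((m.natAbs : ℤ) * φ + δ) :=
  ⟨_, fun φ => by rw [azimuthal, sub_eq_add_neg, Int.cast_natCast]⟩

theorem integral_azimuthal {m : ℤ} (hm : m ≠ 0) :
    ∫ φ in (0 : ℝ)..(2 * Real.pi), azimuthal m φ = 0 := by
  obtain ⟨δ, hδ⟩ := azimuthal_eq_cos_add m
  simp only [hδ]
  exact integral_cos_int_mul_add (by omega) δ

theorem integral_azimuthal_mul_azimuthal {m m' : ℤ} (h : m.natAbs ≠ m'.natAbs) :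
    ∫ φ in (0 : ℝ)..(2 * Real.pi), azimuthal m φ * azimuthal m' φ = 0 := by
  obtain ⟨δ, hδ⟩ := azimuthal_eq_cos_add m
  obtain ⟨δ', hδ'⟩ := azimuthal_eq_cos_add m'
  have product (φ : ℝ) : azimuthal m φ * azimuthal m' φ =
      (Real.cos ((m.natAbs + m'.natAbs : ℤ) * φ + (δ + δ')) +
        Real.cos ((m.natAbs - m'.natAbs : ℤ) * φ + (δ - δ'))) / 2 := by
    rw [hδ, hδ', eq_div_iff two_ne_zero, mul_comm, ← mul_assoc, Real.two_mul_cos_mul_cos, add_comm]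
    push_cast
    ring_nf
  simp only [product, intervalIntegral.integral_div]
  rw [intervalIntegral.integral_add (Continuous.intervalIntegrable (by fun_prop) _ _)
    (Continuous.intervalIntegrable (by fun_prop) _ _), integral_cos_int_mul_add (by omega),
    integral_cos_int_mul_add (by omega), add_zero, zero_div]

theorem integral_cos_two_mul_pow_mul_azimuthal_eq_zero {i : ℕ} {m : ℤ}
    (h : m < 0 ∨ Odd m ∨ 2 * (i : ℤ) < m) :
    ∫ φ in (0 : ℝ)..(2 * Real.pi), Real.cos (2 * φ) ^ i * azimuthal m φ = 0 := by
  unfold azimuthal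
  split_ifs with hm
  · lift m to ℕ using hm
    simpa using integral_cos_two_mul_pow_mul_cos_eq_zero (i := i) (a := m)
      (by simpa [(Int.natCast_nonneg m).not_gt] using h) 0
  · simpa only [Real.cos_sub_pi_div_two, Int.cast_natCast] using
      integral_cos_two_mul_pow_mul_sin i m.natAbs

theorem integral_cos_two_mul_pow_mul_azimuthal_top (i : ℕ) :
    ∫ φ in (0 : ℝ)..(2 * Real.pi), Real.cos (2 * φ) ^ i * azimuthal (2 * i) φ =
      2 * Real.pi / 2 ^ i := by
  rw [← integral_cos_two_mul_pow_mul_cos_top]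
  congr 1 with φ
  rw [azimuthal, if_pos (by positivity)]
  simp [Int.natAbs_mul]

end LongitudinalIntegrals

section ColatitudinalIntegrals

open Polynomial

theorem integral_comp_cos_mul_sin {F : ℝ → ℝ} (hF : Continuous F) :
    ∫ θ in (0 : ℝ)..Real.pi, F (Real.cos θ) * Real.sin θ = ∫ s in (-1 : ℝ)..1, F s := by
  have h := intervalIntegral.integral_comp_mul_deriv (a := 0) (b := Real.pi)
    (fun x _ => Real.hasDerivAt_cos x) (by fun_prop) hF
  simp only [Function.comp_apply, mul_neg, intervalIntegral.integral_neg, Real.cos_zero,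
    Real.cos_pi] at h
  rw [intervalIntegral.integral_symm (-1) 1] at h
  exact neg_injective h

theorem integral_mul_polar {A : ℝ → ℝ} {P : ℝ[X]} {m : ℤ} (n : ℕ)
    (hA : ∀ θ, A θ * |Real.sin θ| ^ m.natAbs = P.eval (Real.cos θ)) :
    ∫ θ in (0 : ℝ)..Real.pi, A θ * polar n m θ * Real.sin θ =
      ∫ s in (-1 : ℝ)..1, P.eval s * (rodrigues n (n + m.natAbs)).eval s := by
  rw [← integral_comp_cos_mul_sin (by fun_prop)]
  simp only [← hA, polar, mul_assoc]

theorem natDegree_one_sub_X_sq_pow (r : ℕ) : ((1 - X ^ 2 : ℝ[X]) ^ r).natDegree = 2 * r := by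
  rw [← natDegree_X_sq_sub_one_pow, natDegree_pow, natDegree_pow, ← neg_sub, natDegree_neg]

theorem X_sq_sub_one_pow_dvd_one_sub_X_sq_pow {m r : ℕ} (h : m ≤ r) :
    (X ^ 2 - 1 : ℝ[X]) ^ m ∣ (1 - X ^ 2) ^ r :=
  (pow_dvd_pow _ h).trans (pow_dvd_pow_of_dvd ⟨-1, by ring⟩ r)

theorem abs_sin_pow_mul_self (θ : ℝ) (r : ℕ) :
    |Real.sin θ| ^ r * |Real.sin θ| ^ r = ((1 - X ^ 2 : ℝ[X]) ^ r).eval (Real.cos θ) := by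
  simp only [eval_pow, eval_sub, eval_one, eval_X, ← Real.sin_sq]
  rw [← mul_pow, ← sq, sq_abs]

theorem integral_polar_mul_polar {n n' : ℕ} (h : n < n') {m m' : ℤ} (hm : m.natAbs = m'.natAbs) :
    ∫ θ in (0 : ℝ)..Real.pi, polar n m θ * polar n' m' θ * Real.sin θ = 0 := by
  rw [integral_mul_polar (P := (1 - X ^ 2) ^ m'.natAbs * rodrigues n (n + m'.natAbs))]
  · rcases lt_or_ge n m'.natAbs with hn | hn
    · simp [rodrigues_eq_zero (by omega : 2 * n < n + m'.natAbs)]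
    refine integral_eval_mul_rodrigues_eq_zero
      ((X_sq_sub_one_pow_dvd_one_sub_X_sq_pow le_rfl).mul_right _)
      (natDegree_mul_le.trans_lt ?_)
    have := natDegree_rodrigues_le n (n + m'.natAbs)
    rw [natDegree_one_sub_X_sq_pow]
    omega
  · intro θ
    rw [polar, hm, eval_mul, ← abs_sin_pow_mul_self]
    ring

theorem one_sub_X_sq_ne_zero : (1 - X ^ 2 : ℝ[X]) ≠ 0 :=
  ne_zero_of_natDegree_gt (n := 0) <| by
    have := natDegree_one_sub_X_sq_pow 1
    rw [pow_one] at this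
    omega

theorem natDegree_one_sub_X_sq_pow_mul_X_pow (r k : ℕ) :
    ((1 - X ^ 2 : ℝ[X]) ^ r * X ^ k).natDegree = 2 * r + k := by
  rw [natDegree_mul_X_pow k (pow_ne_zero r one_sub_X_sq_ne_zero), natDegree_one_sub_X_sq_pow]

theorem integral_sin_cos_pow_mul_polar (i j k n : ℕ) :
    ∫ θ in (0 : ℝ)..Real.pi,
        (Real.sin θ ^ 2) ^ i * Real.cos θ ^ k * polar n (2 * j) θ * Real.sin θ =
      ∫ s in (-1 : ℝ)..1, ((1 - X ^ 2) ^ (i + j) * X ^ k : ℝ[X]).eval s *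
        (rodrigues n (n + 2 * j)).eval s := by
  have hj : (2 * (j : ℤ)).natAbs = 2 * j := by omega
  rw [integral_mul_polar (P := (1 - X ^ 2) ^ (i + j) * X ^ k)]
  · rw [hj]
  · intro θ
    rw [hj, eval_mul, pow_add, eval_mul, ← abs_sin_pow_mul_self θ j, two_mul, pow_add]
    simp only [eval_pow, eval_sub, eval_one, eval_X, Real.sin_sq]
    ring

theorem integral_sin_cos_pow_mul_polar_eq_zero {i j k n : ℕ} (hj : j ≤ i)
    (hn : 2 * i + k < n) :
    ∫ θ in (0 : ℝ)..Real.pi,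
      (Real.sin θ ^ 2) ^ i * Real.cos θ ^ k * polar n (2 * j) θ * Real.sin θ = 0 := by
  rw [integral_sin_cos_pow_mul_polar]
  refine integral_eval_mul_rodrigues_eq_zero
    ((X_sq_sub_one_pow_dvd_one_sub_X_sq_pow (by omega)).mul_right _) ?_
  rw [natDegree_one_sub_X_sq_pow_mul_X_pow]
  omega

theorem integral_sin_cos_pow_mul_polar_ne_zero (i k : ℕ) :
    ∫ θ in (0 : ℝ)..Real.pi,
      (Real.sin θ ^ 2) ^ i * Real.cos θ ^ k * polar (2 * i + k) (2 * i) θ * Real.sin θ ≠ 0 := by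
  rw [integral_sin_cos_pow_mul_polar]
  refine integral_eval_mul_rodrigues_ne_zero
    ((X_sq_sub_one_pow_dvd_one_sub_X_sq_pow (by omega)).mul_right _)
    (mul_ne_zero (pow_ne_zero _ one_sub_X_sq_ne_zero) (pow_ne_zero _ X_ne_zero)) ?_
  rw [natDegree_one_sub_X_sq_pow_mul_X_pow]
  omega

end ColatitudinalIntegrals

section HarmonicCoefficients

theorem sInner_congr {u u' : SphereFun} (h : ∀ θ ∈ Set.Icc 0 Real.pi, ∀ φ, u θ φ = u' θ φ)
    (v : SphereFun) : sInner u v = sInner u' v :=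
  intervalIntegral.integral_congr fun φ _ => intervalIntegral.integral_congr fun θ hθ => by
    rw [Set.uIcc_of_le Real.pi_pos.le] at hθ
    simp only [h θ hθ φ]

theorem sInner_const_mul (c : ℝ) (u v : SphereFun) :
    sInner (fun θ φ => c * u θ φ) v = c * sInner u v := by
  simp only [sInner, mul_assoc, intervalIntegral.integral_const_mul]

theorem sInner_add {u u' v : SphereFun} (hu : Continuous (Function.uncurry u))
    (hu' : Continuous (Function.uncurry u')) (hv : Continuous (Function.uncurry v)) :
    sInner (fun θ φ => u θ φ + u' θ φ) v = sInner u v + sInner u' v := by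
  have continuous_section {w : SphereFun} (hw : Continuous (Function.uncurry w)) (φ : ℝ) :
      IntervalIntegrable (fun θ => w θ φ * v θ φ * Real.sin θ) volume 0 Real.pi := by
    refine Continuous.intervalIntegrable ?_ _ _
    exact ((hw.comp (Continuous.prodMk_left φ)).mul
      (hv.comp (Continuous.prodMk_left φ))).mul Real.continuous_sin
  have continuous_integral {w : SphereFun} (hw : Continuous (Function.uncurry w)) :
      IntervalIntegrable (fun φ => ∫ θ in (0 : ℝ)..Real.pi, w θ φ * v θ φ * Real.sin θ)
        volume 0 (2 * Real.pi) := by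
    refine (intervalIntegral.continuous_parametric_intervalIntegral_of_continuous'
      (μ := volume) ?_ _ _).intervalIntegrable _ _
    exact ((hw.comp continuous_swap).mul (hv.comp continuous_swap)).mul
      (Real.continuous_sin.comp continuous_snd)
  simp only [sInner, add_mul]
  refine .trans ?_
    (intervalIntegral.integral_add (continuous_integral hu) (continuous_integral hu'))
  exact intervalIntegral.integral_congr fun φ _ =>
    intervalIntegral.integral_add (continuous_section hu φ) (continuous_section hu' φ)

theorem continuous_uncurry_sum {ι : Type*} (s : Finset ι) {u : ι → SphereFun}
    (hu : ∀ i, Continuous (Function.uncurry (u i))) :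
    Continuous (Function.uncurry fun θ φ => ∑ i ∈ s, u i θ φ) :=
  continuous_finsetSum s fun i _ => hu i

theorem sInner_sum {ι : Type*} (s : Finset ι) {u : ι → SphereFun} {v : SphereFun}
    (hu : ∀ i, Continuous (Function.uncurry (u i))) (hv : Continuous (Function.uncurry v)) :
    sInner (fun θ φ => ∑ i ∈ s, u i θ φ) v = ∑ i ∈ s, sInner (u i) v := by
  classical
  induction s using Finset.induction_on with
  | empty => simp [sInner]
  | insert i s hi ih =>
    simp only [Finset.sum_insert hi, ← ih]
    exact sInner_add (hu i) (continuous_uncurry_sum s hu) hv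

theorem abs_sInner_le {u v : SphereFun} {C : ℝ} (h : ∀ θ φ, |u θ φ * v θ φ| ≤ C) :
    |sInner u v| ≤ 2 * Real.pi ^ 2 * C := by
  have inner_le (φ : ℝ) : ‖∫ θ in (0 : ℝ)..Real.pi, u θ φ * v θ φ * Real.sin θ‖ ≤
      C * |Real.pi - 0| := by
    refine intervalIntegral.norm_integral_le_of_norm_le_const fun θ _ => ?_
    rw [norm_mul]
    exact (mul_le_of_le_one_right (norm_nonneg _) (Real.abs_sin_le_one θ)).trans (h θ φ)
  refine (intervalIntegral.norm_integral_le_of_norm_le_const fun φ _ => inner_le φ).trans_eq ?_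
  rw [sub_zero, sub_zero, abs_of_pos Real.pi_pos, abs_of_pos Real.two_pi_pos]
  ring

theorem sInner_mul_ynm (A B : ℝ → ℝ) (n : ℕ) (m : ℤ) :
    sInner (fun θ φ => A θ * B φ) (Ynm n m) = harmonicNorm n m *
      (∫ θ in (0 : ℝ)..Real.pi, A θ * polar n m θ * Real.sin θ) *
      ∫ φ in (0 : ℝ)..(2 * Real.pi), B φ * azimuthal m φ := by
  simp only [sInner, ynm_eq]
  rw [← intervalIntegral.integral_const_mul]
  refine intervalIntegral.integral_congr fun φ _ => ?_
  rw [mul_right_comm, ← intervalIntegral.integral_const_mul]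
  exact intervalIntegral.integral_congr fun θ _ => by ring

theorem sInner_zonal_ynm (A : ℝ → ℝ) (n : ℕ) {m : ℤ} (hm : m ≠ 0) :
    sInner (fun θ _ => A θ) (Ynm n m) = 0 := by
  simpa [integral_azimuthal hm] using sInner_mul_ynm A (fun _ => 1) n m

theorem sInner_ynm_ynm {n n' : ℕ} (h : n < n') (m m' : ℤ) :
    sInner (Ynm n m) (Ynm n' m') = 0 := by
  have split : Ynm n m = fun θ φ => harmonicNorm n m * (polar n m θ * azimuthal m φ) :=
    funext₂ fun θ φ => by rw [ynm_eq, mul_assoc]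
  rw [split, sInner_const_mul, sInner_mul_ynm]
  by_cases hm : m.natAbs = m'.natAbs
  · rw [integral_polar_mul_polar h hm]
    ring
  · rw [integral_azimuthal_mul_azimuthal hm]
    ring

theorem sphNontrivial_of_coeff_ne_zero {u : SphereFun} (hu : Continuous (Function.uncurry u))
    {n : ℕ} {m : ℤ} (hn : 2 < n) (hm : m ≠ 0) (hc : coeff u n m ≠ 0) : SphNontrivial u := by
  rintro ⟨z, c, hz, h⟩
  have hcY (m : ℤ) : Continuous (Function.uncurry fun θ φ => c m * Ynm 2 m θ φ) :=
    continuous_const.mul (continuous_ynm 2 m)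
  have hsum := continuous_uncurry_sum (Finset.Icc (-2 : ℤ) 2) hcY
  have hu₀ : Continuous (Function.uncurry fun θ (_ : ℝ) =>
      u θ 0 - ∑ m ∈ Finset.Icc (-2 : ℤ) 2, c m * Ynm 2 m θ 0) :=
    (hu.sub hsum).comp (continuous_fst.prodMk continuous_const)
  have decomposition : ∀ θ ∈ Set.Icc 0 Real.pi, ∀ φ, u θ φ =
      (u θ 0 - ∑ m ∈ Finset.Icc (-2 : ℤ) 2, c m * Ynm 2 m θ 0) +
        ∑ m ∈ Finset.Icc (-2 : ℤ) 2, c m * Ynm 2 m θ φ := fun θ hθ φ => by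
    rw [h θ hθ φ, h θ hθ 0, hz θ φ 0]
    ring
  refine hc ?_
  rw [coeff, sInner_congr decomposition, sInner_add hu₀ hsum (continuous_ynm n m),
    sInner_zonal_ynm _ n hm, sInner_sum _ hcY (continuous_ynm n m)]
  simp only [sInner_const_mul, sInner_ynm_ynm hn, mul_zero, Finset.sum_const_zero, add_zero]

theorem SphNontrivial.not_zonalOn {u : SphereFun} (hu : SphNontrivial u) : ¬ZonalOn u := fun h =>
  hu ⟨fun θ _ => u θ 0, 0, fun _ _ _ => rfl, fun θ hθ φ => by simp [h θ hθ φ 0]⟩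

theorem coeff_monomial (i k n : ℕ) (m : ℤ) :
    coeff (monomial i k) n m = scaleFactor ^ (2 * i + k) * (harmonicNorm n m *
      (∫ θ in (0 : ℝ)..Real.pi,
        (Real.sin θ ^ 2) ^ i * Real.cos θ ^ k * polar n m θ * Real.sin θ) *
      ∫ φ in (0 : ℝ)..(2 * Real.pi), Real.cos (2 * φ) ^ i * azimuthal m φ) := by
  rw [← sInner_mul_ynm, ← sInner_const_mul, coeff]
  congr 1
  ext θ φ
  rw [monomial, axial, sectoral]
  ring

theorem coeff_monomial_eq_zero {i k n : ℕ} (m : ℤ) (h : 2 * i + k < n) :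
    coeff (monomial i k) n m = 0 := by
  rw [coeff_monomial]
  by_cases hm : m < 0 ∨ Odd m ∨ 2 * (i : ℤ) < m
  · rw [integral_cos_two_mul_pow_mul_azimuthal_eq_zero hm]
    ring
  · simp only [not_or, not_lt, Int.not_odd_iff_even] at hm
    obtain ⟨m_nonneg, ⟨j, rfl⟩, m_le⟩ := hm
    obtain ⟨j, rfl⟩ := Int.eq_ofNat_of_zero_le (by omega : 0 ≤ j)
    rw [← two_mul, integral_sin_cos_pow_mul_polar_eq_zero (by omega) h]
    ring

theorem coeff_monomial_top_ne_zero (i k : ℕ) :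
    coeff (monomial i k) (2 * i + k) (2 * i) ≠ 0 := by
  have := Real.pi_pos
  have := scaleFactor_pos
  rw [coeff_monomial, integral_cos_two_mul_pow_mul_azimuthal_top]
  have := integral_sin_cos_pow_mul_polar_ne_zero i k
  have := (harmonicNorm_pos (2 * i + k) (2 * i)).ne'
  positivity

theorem abs_monomial_le (i k : ℕ) (θ φ : ℝ) : |monomial i k θ φ| ≤ scaleFactor ^ (2 * i + k) := by
  have hs := scaleFactor_pos
  have axial_le : |axial θ φ| ≤ scaleFactor := by
    rw [axial, abs_mul, abs_of_pos hs]
    exact mul_le_of_le_one_right hs.le (Real.abs_cos_le_one θ)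
  have sectoral_le : |sectoral θ φ| ≤ scaleFactor ^ 2 := by
    rw [sectoral, abs_mul, abs_mul, abs_of_pos (pow_pos hs 2), abs_of_nonneg (sq_nonneg _)]
    exact mul_le_of_le_one_right (by positivity)
      (mul_le_one₀ (Real.sin_sq_le_one θ) (abs_nonneg _) (Real.abs_cos_le_one _))
  rw [monomial, abs_mul, abs_pow, abs_pow, pow_add, pow_mul]
  gcongr

end HarmonicCoefficients

section GevreyBound

theorem continuous_toSphereFun (f : Ell1 OddExponent) :
    Continuous (Function.uncurry (toSphereFun f)) :=
  (uniformlySmooth_monomial.contDiff_eval f).continuous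

theorem toSphereFun_basisVec (p : OddExponent) :
    toSphereFun (basisVec p) = monomial p.1.1 p.1.2 :=
  funext₂ fun θ φ => uniformlySmooth_monomial.eval_basisVec (θ, φ) p

theorem toSphereFun_add (f g : Ell1 OddExponent) :
    toSphereFun (f + g) = fun θ φ => toSphereFun f θ φ + toSphereFun g θ φ :=
  funext₂ fun _ _ => map_add _ f g

theorem toSphereFun_sub (f g : Ell1 OddExponent) :
    toSphereFun (f - g) = fun θ φ => toSphereFun f θ φ - toSphereFun g θ φ :=
  funext₂ fun _ _ => map_sub _ f g

theorem toSphereFun_smul (c : ℝ) (f : Ell1 OddExponent) :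
    toSphereFun (c • f) = fun θ φ => c * toSphereFun f θ φ :=
  funext₂ fun _ _ => map_smul _ c f

theorem periodicPhi_toSphereFun (f : Ell1 OddExponent) : PeriodicPhi (toSphereFun f) := by
  intro θ φ
  have eval_eq : uniformlySmooth_monomial.eval (θ, φ + 2 * Real.pi) =
      uniformlySmooth_monomial.eval (θ, φ) := ell1_continuousLinearMap_ext fun p => by
    rw [uniformlySmooth_monomial.eval_basisVec, uniformlySmooth_monomial.eval_basisVec]
    simp only [Function.uncurry_apply_pair, monomial, axial, sectoral]
    rw [show 2 * (φ + 2 * Real.pi) = 2 * φ + (2 : ℕ) * (2 * Real.pi) by push_cast; ring,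
      Real.cos_add_nat_mul_two_pi]
  exact congr($eval_eq f)

theorem abs_toSphereFun_le (f : Ell1 OddExponent) (θ φ : ℝ) : |toSphereFun f θ φ| ≤ ‖f‖ := by
  rw [← one_mul ‖f‖]
  refine norm_apply_le_of_basisVec (uniformlySmooth_monomial.eval (θ, φ)) (fun p => ?_) f
  rw [uniformlySmooth_monomial.eval_basisVec, Real.norm_eq_abs]
  exact (abs_monomial_le _ _ θ φ).trans
    (pow_le_one₀ scaleFactor_pos.le (by norm_num [scaleFactor]))

/-- The spherical-harmonic coefficient `f ↦ ⟨f, Y_n^m⟩`, as a functional on `ℓ¹`. -/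
def coeffCLM (n : ℕ) (m : ℤ) : Ell1 OddExponent →L[ℝ] ℝ :=
  LinearMap.mkContinuous
    { toFun := fun f => coeff (toSphereFun f) n m
      map_add' := fun f g => by
        rw [toSphereFun_add]
        exact sInner_add (continuous_toSphereFun f) (continuous_toSphereFun g) (continuous_ynm n m)
      map_smul' := fun c f => by
        rw [toSphereFun_smul]
        exact sInner_const_mul c _ _ }
    (2 * Real.pi ^ 2 * 7 ^ n) fun f => by
      rw [mul_assoc, mul_comm (7 ^ n)]
      refine abs_sInner_le fun θ φ => ?_
      rw [abs_mul]
      exact mul_le_mul (abs_toSphereFun_le f θ φ) (abs_ynm_le n m θ φ) (abs_nonneg _)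
        (norm_nonneg f)

theorem coeffCLM_apply (n : ℕ) (m : ℤ) (f : Ell1 OddExponent) :
    coeffCLM n m f = coeff (toSphereFun f) n m :=
  rfl

theorem abs_coeff_toSphereFun_le (f : Ell1 OddExponent) (n : ℕ) (m : ℤ) :
    |coeff (toSphereFun f) n m| ≤ 2 * Real.pi ^ 2 * (7 * scaleFactor) ^ n * ‖f‖ := by
  have hs := scaleFactor_pos
  refine norm_apply_le_of_basisVec (coeffCLM n m) (fun p => ?_) f
  rw [coeffCLM_apply, toSphereFun_basisVec, Real.norm_eq_abs]
  rcases lt_or_ge (2 * p.1.1 + p.1.2) n with h | h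
  · rw [coeff_monomial_eq_zero m h, abs_zero]
    positivity
  refine abs_sInner_le fun θ φ => ?_
  rw [abs_mul, mul_comm, mul_pow]
  exact mul_le_mul (abs_ynm_le n m θ φ) ((abs_monomial_le _ _ θ φ).trans
    (pow_le_pow_of_le_one hs.le (by norm_num [scaleFactor]) h)) (abs_nonneg _) (by positivity)

theorem gevreyWeight_le (n : ℕ) : muSp n ^ 2 * Real.exp (√(muSp n)) ≤ 3 * 48 ^ n := by
  have muSp_nonneg : 0 ≤ muSp n := by unfold muSp; positivity
  have muSp_le : muSp n ≤ (n + 1) ^ 2 := by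
    unfold muSp
    nlinarith [n.cast_nonneg (α := ℝ)]
  have succ_le : (n : ℝ) + 1 ≤ 2 ^ n := by exact_mod_cast n.lt_two_pow_self
  have exp_le : Real.exp (√(muSp n)) ≤ 3 ^ (n + 1) :=
    calc Real.exp (√(muSp n)) ≤ Real.exp ((n + 1 : ℕ) * 1) := by
          rw [Real.exp_le_exp, mul_one, Nat.cast_succ]
          exact (Real.sqrt_le_left (by positivity)).2 muSp_le
      _ = Real.exp 1 ^ (n + 1) := Real.exp_nat_mul _ _
      _ ≤ 3 ^ (n + 1) := by gcongr; exact Real.exp_one_lt_three.le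
  calc muSp n ^ 2 * Real.exp (√(muSp n)) ≤ (((n : ℝ) + 1) ^ 2) ^ 2 * 3 ^ (n + 1) := by gcongr
    _ ≤ ((2 ^ n) ^ 2) ^ 2 * 3 ^ (n + 1) := by gcongr
    _ = 3 * 48 ^ n := by
      rw [show (48 : ℝ) = 2 ^ 4 * 3 by norm_num, mul_pow, ← pow_mul 2 4]
      ring

theorem gevreyTerm_le (f : Ell1 OddExponent) {n : ℕ} {m : ℤ} (hm : |m| ≤ n) :
    muSp n ^ 2 * Real.exp (2 * (1 / 2) * √(muSp n)) * coeff (toSphereFun f) n m ^ 2 ≤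
      12 * Real.pi ^ 4 * ‖f‖ ^ 2 * ((1 / 2) ^ n * (1 / 2) ^ m.natAbs) := by
  rw [mul_one_div_cancel two_ne_zero, one_mul, ← sq_abs (coeff _ n m)]
  calc muSp n ^ 2 * Real.exp (√(muSp n)) * |coeff (toSphereFun f) n m| ^ 2
      ≤ 3 * 48 ^ n * (2 * Real.pi ^ 2 * (7 * scaleFactor) ^ n * ‖f‖) ^ 2 := by
        gcongr ?_ * ?_ ^ 2
        exacts [gevreyWeight_le n, abs_coeff_toSphereFun_le f n m]
    _ = 12 * Real.pi ^ 4 * ‖f‖ ^ 2 * (48 * (7 * scaleFactor) ^ 2) ^ n := by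
        rw [mul_pow 48, ← pow_mul _ 2 n]
        ring
    _ ≤ 12 * Real.pi ^ 4 * ‖f‖ ^ 2 * (1 / 2 * (1 / 2)) ^ n := by
        gcongr _ * ?_ ^ n
        norm_num [scaleFactor]
    _ = 12 * Real.pi ^ 4 * ‖f‖ ^ 2 * ((1 / 2) ^ n * (1 / 2) ^ n) := by rw [mul_pow]
    _ ≤ 12 * Real.pi ^ 4 * ‖f‖ ^ 2 * ((1 / 2) ^ n * (1 / 2) ^ m.natAbs) := by
        gcongr _ * (_ * ?_)
        exact pow_le_pow_of_le_one (by norm_num) (by norm_num)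
          (by rw [Int.abs_eq_natAbs] at hm; exact_mod_cast hm)

theorem summable_geometric_nat_int :
    Summable fun p : ℕ × ℤ => ((1 : ℝ) / 2) ^ p.1 * (1 / 2) ^ p.2.natAbs := by
  refine Summable.mul_of_nonneg (f := fun n : ℕ => ((1 : ℝ) / 2) ^ n)
    (g := fun m : ℤ => (1 / 2) ^ m.natAbs) summable_geometric_two ?_ (fun _ => by positivity)
    fun _ => by positivity
  exact Summable.of_nat_of_neg (by simpa using summable_geometric_two)
    (by simpa using summable_geometric_two)

theorem exists_gevNormSq_le : ∃ C > 0, ∀ f : Ell1 OddExponent,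
    gevNormSq (1 / 2) (toSphereFun f) ≤ ENNReal.ofReal (C * ‖f‖ ^ 2) := by
  have := Real.pi_pos
  have tsum_pos := summable_geometric_nat_int.tsum_pos (fun _ => by positivity) (0, 0) (by norm_num)
  refine ⟨12 * Real.pi ^ 4 * ∑' p : ℕ × ℤ, (1 / 2) ^ p.1 * (1 / 2) ^ p.2.natAbs, by positivity,
    fun f => ?_⟩
  rw [mul_right_comm, ← tsum_mul_left, ENNReal.ofReal_tsum_of_nonneg (fun p => by positivity)
    (summable_geometric_nat_int.mul_left _)]
  refine ENNReal.tsum_le_tsum fun p => ?_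
  split_ifs with h
  · exact ENNReal.ofReal_le_ofReal (gevreyTerm_le f h.2)
  · exact zero_le

end GevreyBound

section ShiftedLaplacianInverse

/-- An inverse of `Δ + 6 + sectoralCoord • Q` on `ℓ¹`. -/
def shiftedLaplacianInv : Ell1 OddExponent →L[ℝ] Ell1 OddExponent :=
  exists_shiftedLaplacian_inverse.choose

theorem shiftedLaplacianInv_apply_add (p : OddExponent) :
    diagCoeff p • shiftedLaplacianInv (basisVec p) + shiftedLaplacianInv (lowerOrder p) =
      basisVec p := by
  rw [← map_smul, ← map_add]
  exact exists_shiftedLaplacian_inverse.choose_spec.1 p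

theorem lapS_shiftedLaplacianInv (f : Ell1 OddExponent) {θ : ℝ} (hθ : Real.sin θ ≠ 0) (φ : ℝ) :
    lapS (toSphereFun (shiftedLaplacianInv f)) θ φ =
      toSphereFun f θ φ - 6 * toSphereFun (shiftedLaplacianInv f) θ φ -
        sectoralCoord (shiftedLaplacianInv f) * sectoral θ φ := by
  have := exists_shiftedLaplacian_inverse.choose_spec.2 f θ φ hθ
  rw [← shiftedLaplacianInv] at this
  linear_combination this

theorem diagCoeff_ne_zero (p : OddExponent) : diagCoeff p ≠ 0 :=
  abs_pos.1 (one_pos.trans_le (one_le_abs_diagCoeff p))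

theorem shiftedLaplacianInv_basisVec {p : OddExponent} (hi : p.1.1 ≤ 1) (hk : p.1.2 ≤ 1) :
    shiftedLaplacianInv (basisVec p) = (diagCoeff p)⁻¹ • basisVec p := by
  rw [eq_inv_smul_iff₀ (diagCoeff_ne_zero p)]
  simpa [lowerOrder_eq_zero hi hk] using shiftedLaplacianInv_apply_add p

theorem shiftedLaplacianInv_axial :
    shiftedLaplacianInv (monomialVec 0 1) = (1 / 4 : ℝ) • monomialVec 0 1 := by
  rw [monomialVec_of_odd odd_one, shiftedLaplacianInv_basisVec zero_le_one le_rfl]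
  norm_num [diagCoeff, sectoralExponent, degree]

theorem shiftedLaplacianInv_sectoral :
    shiftedLaplacianInv (monomialVec 1 0) = monomialVec 1 0 := by
  rw [monomialVec_of_odd odd_one, shiftedLaplacianInv_basisVec le_rfl zero_le_one]
  simp [diagCoeff, sectoralExponent]

theorem coeffCLM_monomialVec_eq_zero {i k n : ℕ} (m : ℤ) (h : 2 * i + k < n) :
    coeffCLM n m (monomialVec i k) = 0 := by
  by_cases hodd : Odd (i + k)
  · rw [coeffCLM_apply, toSphereFun_monomialVec hodd, coeff_monomial_eq_zero m h]
  · rw [monomialVec, dif_neg hodd, map_zero]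

theorem cast_mul_pred_eq_zero_or_two_le (j : ℕ) : (j : ℝ) * (j - 1) = 0 ∨ 2 ≤ j := by
  rcases lt_or_ge j 2 with h | h
  · left
    interval_cases j <;> norm_num
  · exact .inr h

theorem map_lowerOrder_eq_zero (Λ : Ell1 OddExponent →L[ℝ] ℝ) {p : OddExponent}
    (h : ∀ i k, 2 * i + k < degree p → Λ (monomialVec i k) = 0) : Λ (lowerOrder p) = 0 := by
  obtain ⟨⟨i, k⟩, hodd⟩ := p
  simp only [degree] at h
  simp only [lowerOrder, map_add, map_sub, map_smul]
  rcases cast_mul_pred_eq_zero_or_two_le i with hi | hi <;>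
    rcases cast_mul_pred_eq_zero_or_two_le k with hk | hk <;>
    simp (disch := omega) [h, hi, hk]

theorem diagCoeff_mul_coeffCLM_shiftedLaplacianInv {n : ℕ} {m : ℤ} {p : OddExponent}
    (h : ∀ i k, 2 * i + k < degree p → coeffCLM n m (shiftedLaplacianInv (monomialVec i k)) = 0) :
    diagCoeff p * coeffCLM n m (shiftedLaplacianInv (basisVec p)) = coeffCLM n m (basisVec p) := by
  have lower : coeffCLM n m (shiftedLaplacianInv (lowerOrder p)) = 0 :=
    map_lowerOrder_eq_zero (coeffCLM n m ∘L shiftedLaplacianInv) h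
  have := congrArg (coeffCLM n m) (shiftedLaplacianInv_apply_add p)
  rwa [map_add, map_smul, lower, add_zero, smul_eq_mul] at this

theorem coeffCLM_shiftedLaplacianInv_eq_zero {i k n : ℕ} (m : ℤ) (h : 2 * i + k < n) :
    coeffCLM n m (shiftedLaplacianInv (monomialVec i k)) = 0 := by
  induction hd : 2 * i + k using Nat.strong_induction_on generalizing i k with
  | _ d ih =>
    by_cases hodd : Odd (i + k)
    · have diag := diagCoeff_mul_coeffCLM_shiftedLaplacianInv (p := ⟨(i, k), hodd⟩) fun i' k' h' =>
        ih _ (h'.trans_eq hd) (h'.trans h) rfl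
      rw [← monomialVec_of_odd hodd, coeffCLM_monomialVec_eq_zero m h] at diag
      exact (mul_eq_zero.1 diag).resolve_left (diagCoeff_ne_zero _)
    · rw [monomialVec, dif_neg hodd, map_zero, map_zero]

theorem coeffCLM_shiftedLaplacianInv_top_ne_zero {i k : ℕ} (h : Odd (i + k)) :
    coeffCLM (2 * i + k) (2 * i) (shiftedLaplacianInv (monomialVec i k)) ≠ 0 := by
  have diag := diagCoeff_mul_coeffCLM_shiftedLaplacianInv (p := ⟨(i, k), h⟩) fun i' k' h' =>
    coeffCLM_shiftedLaplacianInv_eq_zero (2 * i) h'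
  simp only [degree] at diag
  rw [← monomialVec_of_odd h, coeffCLM_apply _ _ (monomialVec i k),
    toSphereFun_monomialVec h] at diag
  exact right_ne_zero_of_mul (diag ▸ coeff_monomial_top_ne_zero i k)

end ShiftedLaplacianInverse

section SteadyStates

/-- The exponent of a product of three monomials. -/
def addExponents (p q r : OddExponent) : OddExponent :=
  ⟨p.1 + q.1 + r.1, by
    have := p.2; have := q.2; have := r.2
    simp only [Prod.fst_add, Prod.snd_add, Nat.odd_iff] at *
    omega⟩

/-- The product of three functions on the sphere, on the level of `ℓ¹`. -/
abbrev tripleProduct : Ell1 OddExponent →L[ℝ] Ell1 OddExponent →L[ℝ] Ell1 OddExponent →L[ℝ]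
    Ell1 OddExponent :=
  ell1Trilinear addExponents

theorem toSphereFun_axial : toSphereFun (monomialVec 0 1) = axial := by
  ext θ φ
  rw [toSphereFun_monomialVec odd_one, monomial, pow_zero, one_mul, pow_one]

theorem toSphereFun_sectoral : toSphereFun (monomialVec 1 0) = sectoral := by
  ext θ φ
  rw [toSphereFun_monomialVec odd_one, monomial, pow_zero, mul_one, pow_one]

theorem toSphereFun_tripleProduct (f g h : Ell1 OddExponent) (θ φ : ℝ) :
    toSphereFun (tripleProduct f g h) θ φ =
      toSphereFun f θ φ * toSphereFun g θ φ * toSphereFun h θ φ := by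
  refine map_ell1Trilinear (χ := uniformlySmooth_monomial.eval (θ, φ)) (fun p q r => ?_) f g h
  simp only [uniformlySmooth_monomial.eval_basisVec, Function.uncurry_apply_pair, monomial,
    addExponents, Prod.fst_add, Prod.snd_add]
  ring

theorem hasStrictFDerivAt_tripleProduct (ψ : Ell1 OddExponent) :
    ∃ N' : Ell1 OddExponent →L[ℝ] Ell1 OddExponent,
      HasStrictFDerivAt (fun ψ => tripleProduct ψ ψ ψ) N' ψ := by
  have first_slot : HasStrictFDerivAt (fun ψ => tripleProduct ψ) tripleProduct ψ :=
    tripleProduct.hasStrictFDerivAt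
  exact ⟨_, (first_slot.clm_apply (hasStrictFDerivAt_id ψ)).clm_apply (hasStrictFDerivAt_id ψ)⟩

theorem tripleProduct_axial_add_sectoral {κ a : ℝ} {ψ : Ell1 OddExponent}
    (hψ : ψ = κ • monomialVec 0 1 + a • monomialVec 1 0) :
    tripleProduct ψ ψ ψ =
      κ ^ 3 • monomialVec 0 3 + (3 * κ ^ 2 * a) • monomialVec 1 2 +
        (3 * κ * a ^ 2) • monomialVec 2 1 + a ^ 3 • monomialVec 3 0 := by
  rw [hψ]
  simp only [monomialVec_of_odd (show Odd (0 + 1) by decide),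
    monomialVec_of_odd (show Odd (1 + 0) by decide),
    monomialVec_of_odd (show Odd (0 + 3) by decide),
    monomialVec_of_odd (show Odd (1 + 2) by decide),
    monomialVec_of_odd (show Odd (2 + 1) by decide),
    monomialVec_of_odd (show Odd (3 + 0) by decide), map_add, map_smul, add_apply, smul_apply,
    ell1Trilinear_basisVec, addExponents, Prod.mk_add_mk, Nat.reduceAdd]
  module

/- Only the term `QZ²` of the cube contributes to `Y₄²` at first order in `a`: the term `Z³` has
degree `3`, and the other two are `O(a²)`. -/
theorem exists_coeffCLM_tripleProduct_ne_zero {κ : ℝ} (hκ : κ ≠ 0) :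
    ∃ a₀ > 0, ∀ a : ℝ, 0 < a → a ≤ a₀ → ∀ ψ, ψ = κ • monomialVec 0 1 + a • monomialVec 1 0 →
      coeffCLM 4 2 (shiftedLaplacianInv (tripleProduct ψ ψ ψ)) ≠ 0 := by
  let coord (i k : ℕ) : ℝ := coeffCLM 4 2 (shiftedLaplacianInv (monomialVec i k))
  have leading : 3 * κ ^ 2 * coord 1 2 ≠ 0 :=
    mul_ne_zero (by positivity)
      (coeffCLM_shiftedLaplacianInv_top_ne_zero (i := 1) (k := 2) (by decide))
  have bracket_ne_zero : ∀ᶠ a in nhds (0 : ℝ),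
      3 * κ ^ 2 * coord 1 2 + a * (3 * κ * coord 2 1 + a * coord 3 0) ≠ 0 :=
    Continuous.continuousAt (by fun_prop) |>.eventually_ne (by simpa using leading)
  obtain ⟨δ, hδ, hball⟩ := Metric.eventually_nhds_iff.1 bracket_ne_zero
  refine ⟨δ / 2, half_pos hδ, fun a ha ha' ψ hψ => ?_⟩
  have expansion : coeffCLM 4 2 (shiftedLaplacianInv (tripleProduct ψ ψ ψ)) =
      a * (3 * κ ^ 2 * coord 1 2 + a * (3 * κ * coord 2 1 + a * coord 3 0)) := by
    rw [tripleProduct_axial_add_sectoral hψ]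
    simp only [map_add, map_smul, smul_eq_mul, coord,
      coeffCLM_shiftedLaplacianInv_eq_zero 2 (by norm_num : 2 * 0 + 3 < 4)]
    ring
  rw [expansion]
  refine mul_ne_zero ha.ne' (hball ?_)
  rw [Real.dist_eq, sub_zero, abs_of_pos ha]
  linarith

theorem exists_bifurcating_state {κ : ℝ} (hκ : κ ≠ 0) :
    ∃ a₀ > 0, ∀ a : ℝ, 0 < a → a ≤ a₀ → ∃ (ψ : Ell1 OddExponent) (α β : ℝ),
      ψ = shiftedLaplacianInv (α • ψ + β • tripleProduct ψ ψ ψ +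
        ((4 * κ) • monomialVec 0 1 + a • monomialVec 1 0)) ∧
      sectoralCoord ψ = a ∧ ‖κ • monomialVec 0 1 - ψ‖ ≤ 2 * a ∧ coeff (toSphereFun ψ) 4 2 ≠ 0 := by
  obtain ⟨a₀, ha₀, hcubic⟩ := exists_coeffCLM_tripleProduct_ne_zero hκ
  refine ⟨a₀, ha₀, fun a ha ha' => ?_⟩
  set ψ₀ : Ell1 OddExponent := κ • monomialVec 0 1 + a • monomialVec 1 0 with hψ₀
  have coord_axial : sectoralCoord (monomialVec 0 1) = 0 := by
    rw [monomialVec_of_odd odd_one, sectoralCoord_basisVec, if_neg (by decide)]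
  have coord_sectoral : sectoralCoord (monomialVec 1 0) = 1 := by
    rw [monomialVec_of_odd odd_one, sectoralCoord_basisVec]
    exact if_pos rfl
  have inv_source : shiftedLaplacianInv ((4 * κ) • monomialVec 0 1 + a • monomialVec 1 0) = ψ₀ := by
    rw [map_add, map_smul, map_smul, shiftedLaplacianInv_axial, shiftedLaplacianInv_sectoral]
    module
  have inv_ψ₀ : shiftedLaplacianInv ψ₀ = (κ / 4) • monomialVec 0 1 + a • monomialVec 1 0 := by
    rw [hψ₀, map_add, map_smul, map_smul, shiftedLaplacianInv_axial, shiftedLaplacianInv_sectoral]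
    module
  have coeff_eq_zero (b : ℝ) :
      coeffCLM 4 2 (b • monomialVec 0 1 + a • monomialVec 1 0) = 0 := by
    simp [coeffCLM_monomialVec_eq_zero]
  obtain ⟨N', hN'⟩ := hasStrictFDerivAt_tripleProduct ψ₀
  have coord_inv_ne_zero : sectoralCoord (shiftedLaplacianInv ψ₀) ≠ 0 := by
    simp [inv_ψ₀, coord_axial, coord_sectoral, ha.ne']
  obtain ⟨ψ, α, β, hψ, hcoord, hnear, hcoeff⟩ := exists_bordered_solution shiftedLaplacianInv
    sectoralCoord (coeffCLM 4 2) hN' inv_source coord_inv_ne_zero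
    (inv_ψ₀ ▸ coeff_eq_zero _) (hcubic a ha ha' ψ₀ hψ₀) ha
  refine ⟨ψ, α, β, hψ, ?_, ?_, ?_⟩
  · simp [hcoord, hψ₀, coord_axial, coord_sectoral]
  · calc ‖κ • monomialVec 0 1 - ψ‖ = ‖-(ψ - ψ₀) - a • monomialVec 1 0‖ := by
          rw [hψ₀]; congr 1; module
      _ ≤ ‖ψ - ψ₀‖ + ‖a • monomialVec 1 0‖ := (norm_sub_le _ _).trans_eq (by rw [norm_neg])
      _ ≤ 2 * a := by linarith [norm_smul_monomialVec_le ha.le 1 0]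
  · rwa [hψ₀, coeff_eq_zero κ] at hcoeff

theorem advect_lapS_sub_eq_zero {κ a α β : ℝ} {ψ : Ell1 OddExponent}
    (hψ : ψ = shiftedLaplacianInv (α • ψ + β • tripleProduct ψ ψ ψ +
      ((4 * κ) • monomialVec 0 1 + a • monomialVec 1 0)))
    (ha : sectoralCoord ψ = a) {θ : ℝ} (hθ : θ ∈ Set.Ioo 0 Real.pi) (φ : ℝ) :
    advect (toSphereFun ψ) (fun t p => lapS (toSphereFun ψ) t p - 4 * (κ * axial t p)) θ φ = 0 := by
  refine SphSmooth.advect_comp_eq_zero (uniformlySmooth_monomial.smooth_eval ψ)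
    (f := fun x => (α - 6) * x + β * x ^ 3)
    (fun x => ((hasDerivAt_id x).const_mul _).add ((hasDerivAt_pow 3 x).const_mul _))
    (fun t ht p => ?_) hθ
  have lap := lapS_shiftedLaplacianInv (α • ψ + β • tripleProduct ψ ψ ψ +
    ((4 * κ) • monomialVec 0 1 + a • monomialVec 1 0)) (Real.sin_pos_of_mem_Ioo ht).ne' p
  rw [← hψ, ha] at lap
  simp only [toSphereFun_add, toSphereFun_smul, toSphereFun_tripleProduct] at lap
  rw [lap, toSphereFun_axial, toSphereFun_sectoral]
  ring

theorem exists_rigidRotation_eq_axial {γ : ℝ} (hγ : γ ≠ 0) :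
    ∃ κ ≠ 0, ∀ θ φ, γ * Ynm 1 0 θ φ = κ * axial θ φ := by
  have hs := scaleFactor_pos
  have := Real.pi_pos
  refine ⟨γ * √(3 / (4 * Real.pi)) / scaleFactor, by positivity, fun θ φ => ?_⟩
  rw [ynm_one_zero, axial]
  field_simp

end SteadyStates

/-- For `γ ≠ 0` there exist real-analytic non-zonal, non-trivial
steady solutions of the Euler equations on the `γ`-rotating sphere arbitrarily
close (in Gevrey norm) to the rigid rotation stream function `γY₁⁰`. -/
theorem nonzonal_steady_near_rigid_rotation (γ : ℝ) (hγ : γ ≠ 0) :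
    ∃ (lam M ε₀ : ℝ), 0 < lam ∧ 0 < M ∧ 0 < ε₀ ∧
      ∀ ε : ℝ, 0 < ε → ε ≤ ε₀ →
        ∃ Ψ : SphereFun,
          SphSmooth Ψ ∧ PeriodicPhi Ψ ∧ RealAnalyticSphere Ψ ∧
          -- steady Euler on the γ-rotating sphere: ∇⊥Ψ·∇(ΔΨ − 4γY₁⁰) = 0
          (∀ θ ∈ Set.Ioo (0:ℝ) Real.pi, ∀ φ : ℝ,
            advect Ψ (fun t p => lapS Ψ t p - 4*γ*Ynm 1 0 t p) θ φ = 0) ∧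
          gevNormSq lam (fun θ φ => γ*Ynm 1 0 θ φ - Ψ θ φ)
            ≤ ENNReal.ofReal ((M*ε)^2) ∧
          coeff Ψ 4 2 ≠ 0 ∧
          ¬ ZonalOn Ψ ∧ SphNontrivial Ψ := by
  obtain ⟨κ, hκ, hY⟩ := exists_rigidRotation_eq_axial hγ
  obtain ⟨C, hC, gevNormSq_le⟩ := exists_gevNormSq_le
  obtain ⟨a₀, ha₀, exists_state⟩ := exists_bifurcating_state hκ
  refine ⟨1 / 2, 2 * √C, a₀, one_half_pos, by positivity, ha₀, fun ε hε hε' => ?_⟩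
  obtain ⟨ψ, α, β, hψ, hcoord, hnear, hcoeff⟩ := exists_state ε hε hε'
  have hnontrivial : SphNontrivial (toSphereFun ψ) :=
    sphNontrivial_of_coeff_ne_zero (continuous_toSphereFun ψ) (by norm_num) two_ne_zero hcoeff
  have hdiff : (fun θ φ => γ * Ynm 1 0 θ φ - toSphereFun ψ θ φ) =
      toSphereFun (κ • monomialVec 0 1 - ψ) := by
    ext θ φ
    rw [hY, toSphereFun_sub, toSphereFun_smul, toSphereFun_axial]
  refine ⟨toSphereFun ψ, uniformlySmooth_monomial.smooth_eval ψ, periodicPhi_toSphereFun ψ,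
    ⟨1 / 2, one_half_pos, (gevNormSq_le ψ).trans_lt ENNReal.ofReal_lt_top⟩, fun θ hθ φ => ?_, ?_,
    hcoeff, hnontrivial.not_zonalOn, hnontrivial⟩
  · simp only [mul_assoc, hY]
    exact advect_lapS_sub_eq_zero hψ hcoord hθ φ
  · rw [hdiff]
    refine (gevNormSq_le _).trans (ENNReal.ofReal_le_ofReal ?_)
    calc C * ‖κ • monomialVec 0 1 - ψ‖ ^ 2 ≤ C * (2 * ε) ^ 2 := by gcongr
      _ = (2 * √C * ε) ^ 2 := by linear_combination -4 * ε ^ 2 * Real.sq_sqrt hC.le
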